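/- Let E be an ordered Polish space and P a monotone Markov kernel on E. Assume there exists a Borel set C ⊆ E such that C × C is achievable, and that there exist Borel sets A, B with A ⪯ B (meaning a ⪯ b for all a ∈ A, b ∈ B), a number ε > 0 and an integer N ≥ 1 such that P⁽ᴺ⁾(x, A) ≥ ε and P⁽ᴺ⁾(x, B) ≥ ε for every x ∈ C, where P⁽ᴺ⁾ is the N-step transition kernel. Then the set M = {(x,y) : x ⪯ y} is achievable. -/

import Mathlib

open MeasureTheory ProbabilityTheory Filter Topology

/-- `μ` is *stochastically smaller* than `ν` (written `μ ⪯ ν` in the paper):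
`μ I ≤ ν I` for every Borel increasing (upper) set `I`. -/
def StochDom {E : Type*} [MeasurableSpace E] [Preorder E] (μ ν : Measure E) : Prop :=
  ∀ I : Set E, MeasurableSet I → IsUpperSet I → μ I ≤ ν I

/-- A Markov kernel `P` is *(stochastically) monotone* if for every bounded monotone
measurable `g : E → [0,1]` the map `x ↦ ∫ g dP(x)` is again monotone. -/
def MonotoneKernel {E : Type*} [MeasurableSpace E] [Preorder E] (P : Kernel E E) : Prop :=
  ∀ g : E → ℝ, Measurable g → Monotone g → (∀ x, g x ∈ Set.Icc (0 : ℝ) 1) →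
    Monotone fun x => ∫ y, g y ∂(P x)

/-- The `n`-step transition kernel `P⁽ⁿ⁾` of a Markov kernel `P`;
`kpow P n x` is the law of `Xₙˣ`, the chain with kernel `P` started at `x`. -/
noncomputable def kpow {E : Type*} [MeasurableSpace E] (P : Kernel E E) : ℕ → Kernel E E
  | 0 => Kernel.id
  | n + 1 => P.comp (kpow P n)

/-- The process `Z` on `(Ω, μ)` is a (possibly time-inhomogeneous) Markov chain with
one-step kernels `Q n`, expressed through finite-dimensional distributions: for every
bounded measurable cylinder functional `φ` of the past and every Borel set `A`,
`E[φ(Z₀,…,Zₙ) · 1_A(Z_{n+1})] = E[φ(Z₀,…,Zₙ) · (Q n)(Zₙ, A)]`. -/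
def MCStep {Ω S : Type*} [MeasurableSpace Ω] [MeasurableSpace S]
    (μ : Measure Ω) (Q : ℕ → Kernel S S) (Z : ℕ → Ω → S) : Prop :=
  ∀ (n : ℕ) (A : Set S), MeasurableSet A →
    ∀ φ : (Fin (n + 1) → S) → ℝ, Measurable φ → (∀ v, φ v ∈ Set.Icc (0 : ℝ) 1) →
      ∫ ω, φ (fun i => Z i.1 ω) * A.indicator (fun _ => (1 : ℝ)) (Z (n + 1) ω) ∂μ
        = ∫ ω, φ (fun i => Z i.1 ω) * ((Q n) (Z n ω) A).toReal ∂μ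

/-- `X` on `(Ω, μ)` is a time-homogeneous Markov chain with kernel `P` started at `x`. -/
def IsMChain {E Ω : Type*} [MeasurableSpace E] [MeasurableSpace Ω]
    (P : Kernel E E) (x : E) (μ : Measure Ω) (X : ℕ → Ω → E) : Prop :=
  IsProbabilityMeasure μ ∧ (∀ n, Measurable (X n)) ∧ (∀ᵐ ω ∂μ, X 0 ω = x) ∧
    MCStep μ (fun _ => P) X

/-- A *Markovian coupling* of two chains with kernel `P` started at `x` and `y`:
both coordinates are Markov chains with kernel `P` and the pair process is itself a
(possibly time-inhomogeneous) Markov chain. -/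
def IsMarkovianCoupling {E Ω : Type*} [MeasurableSpace E] [MeasurableSpace Ω]
    (P : Kernel E E) (x y : E) (μ : Measure Ω) (X Y : ℕ → Ω → E) : Prop :=
  IsMChain P x μ X ∧ IsMChain P y μ Y ∧
    ∃ Q : ℕ → Kernel (E × E) (E × E), (∀ n, IsMarkovKernel (Q n)) ∧
      MCStep μ Q fun n ω => (X n ω, Y n ω)

/-- A set `H ⊆ E × E` is *achievable* for the kernel `P` if for all `x, y` there is a
Markovian coupling of the chains started at `x` and `y` whose hitting time of `H`
is finite almost surely. -/
def Achievable {E : Type*} [MeasurableSpace E] (P : Kernel E E) (H : Set (E × E)) : Prop :=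
  ∀ x y : E, ∃ (Ω : Type) (_ : MeasurableSpace Ω) (μ : Measure Ω) (X Y : ℕ → Ω → E),
    IsMarkovianCoupling P x y μ X Y ∧ ∀ᵐ ω ∂μ, ∃ n, (X n ω, Y n ω) ∈ H

/-- Condition (BMC): every increasing sequence bounded above by some element converges. -/
def BMC (E : Type*) [Preorder E] [TopologicalSpace E] : Prop :=
  ∀ (x : ℕ → E) (y : E), Monotone x → (∀ n, x n ≤ y) → ∃ l, Tendsto x atTop (nhds l)

/-- The ordered metric space `E` is *normal*: there is a continuous `h : [0,∞) → [0,∞)`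
with `h 0 = 0` such that `x ⪯ y ⪯ z` implies `d(x,y) ≤ h (d(x,z))`. -/
def NormalOrdered (E : Type*) [PseudoMetricSpace E] [Preorder E] : Prop :=
  ∃ h : ℝ → ℝ, ContinuousOn h (Set.Ici 0) ∧ h 0 = 0 ∧ (∀ t ≥ (0 : ℝ), 0 ≤ h t) ∧
    ∀ x y z : E, x ≤ y → y ≤ z → dist x y ≤ h (dist x z)

/-- Condition (PR): there are `x₀ ⪯ y₀` such that the hitting times
`ν⁻ = min {n ≥ 1 : Xₙ^{x₀} ⪰ x₀}` and `ν⁺ = min {n ≥ 1 : Xₙ^{y₀} ⪯ y₀}`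
have finite expectations. -/
def PRCond {E : Type*} [MeasurableSpace E] [Preorder E] (P : Kernel E E) : Prop :=
  ∃ x₀ y₀ : E, x₀ ≤ y₀ ∧
    (∃ (Ω : Type) (_ : MeasurableSpace Ω) (μ : Measure Ω) (X : ℕ → Ω → E),
      IsMChain P x₀ μ X ∧ (∀ᵐ ω ∂μ, ∃ n, 1 ≤ n ∧ x₀ ≤ X n ω) ∧
      Integrable (fun ω => ((sInf {n : ℕ | 1 ≤ n ∧ x₀ ≤ X n ω} : ℕ) : ℝ)) μ) ∧
    (∃ (Ω : Type) (_ : MeasurableSpace Ω) (μ : Measure Ω) (X : ℕ → Ω → E),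
      IsMChain P y₀ μ X ∧ (∀ᵐ ω ∂μ, ∃ n, 1 ≤ n ∧ X n ω ≤ y₀) ∧
      Integrable (fun ω => ((sInf {n : ℕ | 1 ≤ n ∧ X n ω ≤ y₀} : ℕ) : ℝ)) μ)

/-!
Run the two chains side by side and, at every time, put as much as possible of the mass which is
still unmatched onto `M`; by the deficiency version of Strassen's theorem, all but
`sup_I (α I - α' I)` of two laws `α`, `α'` of equal mass can be matched, the supremum being over
upper sets `I`.

Once the chains have visited `C × C` at the same time, `N` steps later `X` is in `A` and `Y` is in
`B` with probability at least `ε` each. As `A ⪯ B` and `P` is monotone, for every upper set `I`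
the probability that `X` ends up outside `I` or the probability that `Y` ends up in `I` is then at
least `ε / 2`. Ville's inequality turns this into `sup_I (P⁽ⁿ⁾(x, I) - P⁽ⁿ⁾(y, I)) ≤ q < 1` for
large `n`, so that the unmatched mass decreases to `0`.

It remains to realize the matching by a *Markovian* coupling. The unmatched laws at time `m` are
coupled by carrying all later matched pairs back to time `m`, with the two coordinates reversed in
time independently of each other; the reversal of this flow is the transition kernel off `M`. On
`M` the pair moves by a monotone coupling, which never leaves `M`. Off `M` the transition kernel
is not a coupling of `P(x, ·)` and `P(y, ·)` from every pair `(x, y)`, but each coordinate is still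
a Markov chain with kernel `P`, because the flow only ever reweights the law of the pair by
functions of that coordinate.
-/

section Strassen

variable {S T : Type*} [TopologicalSpace S] [MeasurableSpace S] [TopologicalSpace T]
  [MeasurableSpace T]

/-- Hall's condition for transporting `α` to `α'` along the relation `R`: every compact set `K`
has at most the mass of its set `R.image K` of admissible partners. -/
def HallCondition (R : SetRel S T) (α : Measure S) (α' : Measure T) : Prop :=
  ∀ K : Set S, IsCompact K → α K ≤ α' (R.image K)

lemma HallCondition.lintegral_le_lintegral [CompactSpace S] [OpensMeasurableSpace S]
    [OpensMeasurableSpace T] {R : SetRel S T} {α : Measure S} {α' : Measure T}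
    (hall : HallCondition R α α') {u : S → ℝ} {v : T → ℝ} (hu : Continuous u) (hv : Continuous v)
    (hu₀ : 0 ≤ u) (hv₀ : 0 ≤ v) (huv : ∀ z ∈ R, u z.1 ≤ v z.2) :
    ∫⁻ s, ENNReal.ofReal (u s) ∂α ≤ ∫⁻ t, ENNReal.ofReal (v t) ∂α' := by
  rw [lintegral_eq_lintegral_meas_le α (ae_of_all _ hu₀) hu.measurable.aemeasurable,
    lintegral_eq_lintegral_meas_le α' (ae_of_all _ hv₀) hv.measurable.aemeasurable]
  refine lintegral_mono fun r => ?_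
  refine (hall {s | r ≤ u s} (isClosed_le continuous_const hu).isCompact).trans
    (measure_mono ?_)
  rintro t ⟨s, hs, hst⟩
  exact le_trans hs (huv _ hst)

lemma HallCondition.integral_add_integral_nonneg [CompactSpace S] [OpensMeasurableSpace S]
    [CompactSpace T] [OpensMeasurableSpace T] {R : SetRel S T} {α : Measure S} {α' : Measure T}
    [IsFiniteMeasure α] [IsFiniteMeasure α'] (hall : HallCondition R α α')
    (hmass : α Set.univ = α' Set.univ) (f : C(S, ℝ)) (g : C(T, ℝ))
    (hfg : ∀ z ∈ R, 0 ≤ f z.1 + g z.2) :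
    0 ≤ ∫ s, f s ∂α + ∫ t, g t ∂α' := by
  set c : ℝ := ‖f‖ + ‖g‖
  have hf : ∀ s, 0 ≤ c - f s := fun s => by
    linarith [(abs_le.1 (f.norm_coe_le_norm s)).2, norm_nonneg g]
  have hg : ∀ t, 0 ≤ g t + c := fun t => by
    linarith [(abs_le.1 (g.norm_coe_le_norm t)).1, norm_nonneg f]
  have hfint : Integrable f α :=
    f.continuous.integrable_of_hasCompactSupport (.of_compactSpace f)
  have hgint : Integrable g α' :=
    g.continuous.integrable_of_hasCompactSupport (.of_compactSpace g)
  have hle : ∫ s, (c - f s) ∂α ≤ ∫ t, (g t + c) ∂α' := by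
    rw [integral_eq_lintegral_of_nonneg_ae (ae_of_all _ hf)
        (by fun_prop : Continuous fun s => c - f s).measurable.aestronglyMeasurable,
      integral_eq_lintegral_of_nonneg_ae (ae_of_all _ hg)
        (by fun_prop : Continuous fun t => g t + c).measurable.aestronglyMeasurable]
    refine ENNReal.toReal_mono (hgint.add (integrable_const c)).lintegral_lt_top.ne ?_
    exact hall.lintegral_le_lintegral (by fun_prop) (by fun_prop) hf hg
      fun z hz => by linarith [hfg z hz]
  have hreal : α.real Set.univ = α'.real Set.univ := by simp only [measureReal_def, hmass]
  rw [integral_sub (integrable_const c) hfint, integral_add hgint (integrable_const c),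
    integral_const, integral_const, hreal] at hle
  linarith

lemma exists_linearMap_extension_nonnegOn {X V : Type*} [TopologicalSpace X] [CompactSpace X]
    [AddCommGroup V] [Module ℝ V] (R : Set X) (F : V →ₗ[ℝ] C(X, ℝ)) (l : V →ₗ[ℝ] ℝ)
    (hone : 1 ∈ LinearMap.range F) (hl : ∀ v, (∀ z ∈ R, 0 ≤ F v z) → 0 ≤ l v) :
    ∃ Λ : C(X, ℝ) →ₗ[ℝ] ℝ, (∀ v, Λ (F v) = l v) ∧ ∀ φ, (∀ z ∈ R, 0 ≤ φ z) → 0 ≤ Λ φ := by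
  have hker : LinearMap.ker F ≤ LinearMap.ker l := fun v hv => by
    rw [LinearMap.mem_ker] at hv ⊢
    refine le_antisymm ?_ (hl v fun z _ => by simp [hv])
    simpa using hl (-v) fun z _ => by simp [hv]
  obtain ⟨m, hm⟩ : ∃ m : LinearMap.range F →ₗ[ℝ] ℝ, ∀ v, m (F.rangeRestrict v) = l v :=
    ⟨(LinearMap.ker F).liftQ l hker ∘ₗ F.quotKerEquivRange.symm.toLinearMap, fun v => by
      have : F.quotKerEquivRange.symm (F.rangeRestrict v) = Submodule.Quotient.mk v := by
        rw [LinearEquiv.symm_apply_eq]; rfl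
      simp [this]⟩
  let cone : PointedCone ℝ C(X, ℝ) :=
    { carrier := {φ | ∀ z ∈ R, 0 ≤ φ z}
      add_mem' := fun hφ hψ z hz => add_nonneg (hφ z hz) (hψ z hz)
      zero_mem' := fun _ _ => le_rfl
      smul_mem' := fun c _ hφ z hz => mul_nonneg c.2 (hφ z hz) }
  obtain ⟨v₁, hv₁⟩ := hone
  obtain ⟨Λ, hΛm, hΛ⟩ := riesz_extension cone ⟨LinearMap.range F, m⟩
    (by rintro ⟨_, v, rfl⟩ hv; exact (hl v hv).trans_eq (hm v).symm)
    (fun φ => ⟨⟨F (‖φ‖ • v₁), LinearMap.mem_range_self F _⟩, fun z _ => by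
      have := (abs_le.1 (φ.norm_coe_le_norm z)).1
      simp only [map_smul, hv₁, ContinuousMap.add_apply, ContinuousMap.smul_apply,
        ContinuousMap.one_apply, smul_eq_mul, mul_one]
      linarith⟩)
  exact ⟨Λ, fun v => (hΛm (F.rangeRestrict v)).trans (hm v), hΛ⟩

lemma exists_measure_integral_eq_of_nonnegOn {X : Type*} [TopologicalSpace X] [CompactSpace X]
    [T2Space X] [PerfectlyNormalSpace X] [MeasurableSpace X] [BorelSpace X] {R : Set X}
    (hR : IsClosed R) (Λ : C(X, ℝ) →ₗ[ℝ] ℝ) (hΛ : ∀ φ, (∀ z ∈ R, 0 ≤ φ z) → 0 ≤ Λ φ) :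
    ∃ γ : Measure X, IsFiniteMeasure γ ∧ γ Rᶜ = 0 ∧ ∀ φ : C(X, ℝ), ∫ z, φ z ∂γ = Λ φ := by
  let Λc : CompactlySupportedContinuousMap X ℝ →ₚ[ℝ] ℝ :=
    { toFun := fun φ => Λ φ.toContinuousMap
      map_add' := fun φ ψ => map_add Λ φ.toContinuousMap ψ.toContinuousMap
      map_smul' := fun c φ => map_smul Λ c φ.toContinuousMap
      monotone' := fun φ ψ hφψ => by
        have := hΛ (ψ.toContinuousMap - φ.toContinuousMap) fun z _ => sub_nonneg.2 (hφψ z)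
        rw [map_sub] at this
        exact sub_nonneg.1 this }
  have hγ : ∀ φ : C(X, ℝ), ∫ z, φ z ∂(RealRMK.rieszMeasure Λc) = Λ φ := fun φ =>
    RealRMK.integral_rieszMeasure Λc ⟨φ, .of_compactSpace _⟩
  refine ⟨RealRMK.rieszMeasure Λc, inferInstance, ?_, hγ⟩
  obtain ⟨f, hRf, -, -, hf⟩ := exists_continuous_one_zero_of_isCompact_of_isGδ hR.isCompact
    hR.isGδ isClosed_empty (Set.disjoint_empty R)
  let h : C(X, ℝ) := 1 - f
  have hh : ∀ z ∈ R, h z = 0 := fun z hz => by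
    have : f z = 1 := by rw [hRf] at hz; exact hz
    simp [h, this]
  have hint : ∫ z, h z ∂(RealRMK.rieszMeasure Λc) = 0 := by
    rw [hγ]
    refine le_antisymm ?_ (hΛ h fun z hz => (hh z hz).ge)
    simpa using hΛ (-h) fun z hz => by simp [hh z hz]
  have hae := (integral_eq_zero_iff_of_nonneg (fun z => sub_nonneg.2 (hf z).2)
    (h.continuous.integrable_of_hasCompactSupport (.of_compactSpace h))).1 hint
  refine measure_eq_zero_iff_ae_notMem.2 ?_
  filter_upwards [hae] with z hz hzR
  refine hzR ?_
  rw [hRf]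
  exact (sub_eq_zero.1 hz).symm

/-- Integration of continuous functions on a compact space against a finite measure, as a linear
functional. -/
noncomputable def integralLinearMap {X : Type*} [TopologicalSpace X] [CompactSpace X]
    [MeasurableSpace X] [OpensMeasurableSpace X] (μ : Measure X) [IsFiniteMeasure μ] :
    C(X, ℝ) →ₗ[ℝ] ℝ where
  toFun f := ∫ x, f x ∂μ
  map_add' f g := integral_add (f.continuous.integrable_of_hasCompactSupport (.of_compactSpace f))
    (g.continuous.integrable_of_hasCompactSupport (.of_compactSpace g))
  map_smul' c f := integral_const_mul c f

lemma HallCondition.exists_coupling_of_compactSpace [CompactSpace S]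
    [TopologicalSpace.MetrizableSpace S] [BorelSpace S]
    [CompactSpace T] [TopologicalSpace.MetrizableSpace T] [BorelSpace T] {R : SetRel S T}
    (hR : IsClosed R) {α : Measure S} {α' : Measure T} [IsFiniteMeasure α] [IsFiniteMeasure α']
    (hall : HallCondition R α α') (hmass : α Set.univ = α' Set.univ) :
    ∃ γ : Measure (S × T), IsFiniteMeasure γ ∧ γ.fst = α ∧ γ.snd = α' ∧ γ Rᶜ = 0 := by
  let F : C(S, ℝ) × C(T, ℝ) →ₗ[ℝ] C(S × T, ℝ) :=
    (ContinuousMap.compRightAlgHom ℝ ℝ .fst).toLinearMap.coprod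
      (ContinuousMap.compRightAlgHom ℝ ℝ .snd).toLinearMap
  have hF : ∀ f g z, F (f, g) z = f z.1 + g z.2 := fun f g z => rfl
  let l : C(S, ℝ) × C(T, ℝ) →ₗ[ℝ] ℝ := (integralLinearMap α).coprod (integralLinearMap α')
  obtain ⟨Λ, hΛF, hΛ⟩ := exists_linearMap_extension_nonnegOn R F l
    ⟨(1, 0), by ext z; simp [hF]⟩ fun p hp => hall.integral_add_integral_nonneg hmass p.1 p.2 hp
  obtain ⟨γ, hγ, hγR, hγΛ⟩ := exists_measure_integral_eq_of_nonnegOn hR Λ hΛ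
  refine ⟨γ, hγ, ?_, ?_, hγR⟩
  · refine ext_of_forall_integral_eq_of_IsFiniteMeasure fun f => ?_
    rw [Measure.fst, integral_map measurable_fst.aemeasurable
      f.continuous.measurable.aestronglyMeasurable]
    simpa [hF, l, integralLinearMap, ← hγΛ] using hΛF (f.toContinuousMap, 0)
  · refine ext_of_forall_integral_eq_of_IsFiniteMeasure fun g => ?_
    rw [Measure.snd, integral_map measurable_snd.aemeasurable
      g.continuous.measurable.aestronglyMeasurable]
    simpa [hF, l, integralLinearMap, ← hγΛ] using hΛF (0, g.toContinuousMap)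

end Strassen

section StrassenPolish

variable {S T : Type*} [MeasurableSpace S] [MeasurableSpace T]

lemma HallCondition.map_embedding {X Y : Type*} [TopologicalSpace S] [PolishSpace S] [BorelSpace S]
    [TopologicalSpace X] [T2Space X] [MeasurableSpace X] [BorelSpace X] [TopologicalSpace Y]
    [MeasurableSpace Y] {R : SetRel S T}
    {α : Measure S} {α' : Measure T} [IsFiniteMeasure α] (hall : HallCondition R α α') {i : S → X}
    {j : T → Y} (hi : Continuous i) (hj : MeasurableEmbedding j) :
    HallCondition (closure (Prod.map i j '' R)) (α.map i) (α'.map j) := by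
  intro L hL
  rw [hj.map_apply, Measure.map_apply hi.measurable hL.isClosed.measurableSet,
    (innerRegular_isCompact_isClosed_measurableSet_of_finite α).measure_eq_iSup
      (hL.isClosed.preimage hi).measurableSet]
  refine iSup₂_le fun K hKL => iSup_le fun hK => (hall K hK.1).trans (measure_mono ?_)
  rintro t ⟨s, hsK, hst⟩
  exact ⟨i s, hKL hsK, subset_closure ⟨(s, t), hst, rfl⟩⟩

lemma ae_mem_range_of_map_eq {X Y : Type*} [MeasurableSpace X] [MeasurableSpace Y]
    {i : S → X} (hi : MeasurableEmbedding i) {γ : Measure Y} {f : Y → X} (hf : Measurable f)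
    {α : Measure S} (h : γ.map f = α.map i) : ∀ᵐ y ∂γ, f y ∈ Set.range i := by
  refine ae_of_ae_map hf.aemeasurable (p := (· ∈ Set.range i)) ?_
  rw [h]
  exact (ae_map_iff hi.measurable.aemeasurable hi.measurableSet_range).2
    (ae_of_all _ Set.mem_range_self)

/-- Strassen's theorem. The compact case is transported along embeddings into the Hilbert cube. -/
theorem HallCondition.exists_coupling [TopologicalSpace S] [PolishSpace S] [BorelSpace S]
    [TopologicalSpace T] [PolishSpace T] [BorelSpace T]
    {R : SetRel S T} (hR : IsClosed R) {α : Measure S} {α' : Measure T} [IsFiniteMeasure α]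
    [IsFiniteMeasure α'] (hall : HallCondition R α α') (hmass : α Set.univ = α' Set.univ) :
    ∃ γ : Measure (S × T), IsFiniteMeasure γ ∧ γ.fst = α ∧ γ.snd = α' ∧ γ Rᶜ = 0 := by
  rcases eq_zero_or_neZero α with rfl | hα
  · have : α' = 0 := Measure.measure_univ_eq_zero.1 (by simpa using hmass.symm)
    exact ⟨0, inferInstance, by simp, by simp [this], by simp⟩
  have hα' : NeZero α' := ⟨fun h => hα.out (Measure.measure_univ_eq_zero.1 (by rw [hmass, h]; rfl))⟩
  have := α.nonempty_of_neZero
  have := α'.nonempty_of_neZero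
  let := TopologicalSpace.upgradeIsCompletelyMetrizable S
  let := TopologicalSpace.upgradeIsCompletelyMetrizable T
  obtain ⟨i, hi⟩ := Metric.PiNatEmbed.exists_embedding_to_hilbert_cube (X := S)
  obtain ⟨j, hj⟩ := Metric.PiNatEmbed.exists_embedding_to_hilbert_cube (X := T)
  have him := hi.continuous.measurableEmbedding hi.injective
  have hjm := hj.continuous.measurableEmbedding hj.injective
  obtain ⟨γ, hγ, hγ₁, hγ₂, hγR⟩ :=
    (hall.map_embedding hi.continuous hjm).exists_coupling_of_compactSpace isClosed_closure (by
      rw [Measure.map_apply him.measurable .univ, Measure.map_apply hjm.measurable .univ]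
      exact hmass)
  have hr := him.measurable_invFun.prodMap hjm.measurable_invFun
  refine ⟨γ.map (Prod.map him.invFun hjm.invFun), inferInstance, ?_, ?_, ?_⟩
  · have : Prod.fst ∘ Prod.map him.invFun hjm.invFun = him.invFun ∘ Prod.fst := rfl
    rw [Measure.fst, Measure.map_map measurable_fst hr, this,
      ← Measure.map_map him.measurable_invFun measurable_fst, ← Measure.fst, hγ₁,
      Measure.map_map him.measurable_invFun him.measurable, him.leftInverse_invFun.comp_eq_id,
      Measure.map_id]
  · have : Prod.snd ∘ Prod.map him.invFun hjm.invFun = hjm.invFun ∘ Prod.snd := rfl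
    rw [Measure.snd, Measure.map_map measurable_snd hr, this,
      ← Measure.map_map hjm.measurable_invFun measurable_snd, ← Measure.snd, hγ₂,
      Measure.map_map hjm.measurable_invFun hjm.measurable, hjm.leftInverse_invFun.comp_eq_id,
      Measure.map_id]
  · rw [Measure.map_apply hr hR.measurableSet.compl, measure_eq_zero_iff_ae_notMem]
    filter_upwards [(mem_ae_iff.2 hγR : ∀ᵐ z ∂γ, z ∈ closure (Prod.map i j '' R)),
      ae_mem_range_of_map_eq him measurable_fst hγ₁,
      ae_mem_range_of_map_eq hjm measurable_snd hγ₂] with z hz hz₁ hz₂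
    obtain ⟨⟨s, hs⟩, t, ht⟩ := And.intro hz₁ hz₂
    have hst : z = Prod.map i j (s, t) := Prod.ext hs.symm ht.symm
    rw [hst] at hz ⊢
    have hmem : (s, t) ∈ Prod.map i j ⁻¹' closure (Prod.map i j '' R) := hz
    rw [← (hi.prodMap hj).closure_eq_preimage_closure_image, hR.closure_eq] at hmem
    simpa [him.leftInverse_invFun s, hjm.leftInverse_invFun t] using hmem

end StrassenPolish

section Deficiency

variable {S T : Type*}

/-- The relation `R` with an extra partner on either side that is related to everything. All points
`(s, false)` represent the extra partner. -/
def withUniversalPartner (R : SetRel S T) : SetRel (S × Bool) (T × Bool) :=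
  {p | p.1.2 = true → p.2.2 = true → (p.1.1, p.2.1) ∈ R}

lemma isClosed_withUniversalPartner [TopologicalSpace S] [TopologicalSpace T] {R : SetRel S T}
    (hR : IsClosed R) : IsClosed (withUniversalPartner R) :=
  isClosed_imp ((isOpen_discrete {true}).preimage (continuous_snd.comp continuous_fst))
    (isClosed_imp ((isOpen_discrete {true}).preimage (continuous_snd.comp continuous_snd))
      (hR.preimage (by fun_prop : Continuous fun p : (S × Bool) × T × Bool => (p.1.1, p.2.1))))

variable [MeasurableSpace S] [MeasurableSpace T]

/-- The measure `α` together with an atom of mass `d` at the extra partner `(s, false)`. -/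
noncomputable def withAtom (α : Measure S) (d : ENNReal) (s : S) : Measure (S × Bool) :=
  α.map (·, true) + d • Measure.dirac (s, false)

lemma withAtom_apply (α : Measure S) (d : ENNReal) (s : S) {D : Set (S × Bool)}
    (hD : MeasurableSet D) :
    withAtom α d s D = α ((·, true) ⁻¹' D) + d * D.indicator 1 (s, false) := by
  simp [withAtom, Measure.map_apply (by fun_prop : Measurable fun s : S => (s, true)) hD,
    Measure.dirac_apply' _ hD]

lemma withAtom_univ (α : Measure S) (d : ENNReal) (s : S) :
    withAtom α d s Set.univ = α Set.univ + d := by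
  simp [withAtom_apply _ _ _ .univ]

instance (α : Measure S) [IsFiniteMeasure α] (d : NNReal) (s : S) :
    IsFiniteMeasure (withAtom α d s) :=
  ⟨by rw [withAtom_univ]; exact ENNReal.add_lt_top.2 ⟨measure_lt_top α _, ENNReal.coe_lt_top⟩⟩

lemma map_restrict_of_map_eq_withAtom {Ω : Type*} [MeasurableSpace Ω] {γ : Measure Ω}
    {f : Ω → S × Bool} (hf : Measurable f) {α : Measure S} {d : ENNReal} {s : S}
    (h : γ.map f = withAtom α d s) :
    (γ.restrict {ω | (f ω).2 = true}).map (fun ω => (f ω).1) = α := by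
  ext A hA
  have hreal : MeasurableSet {p : S × Bool | p.2 = true} := measurable_snd (.singleton _)
  rw [Measure.map_apply hf.fst hA, Measure.restrict_apply (hf.fst hA)]
  calc γ (f ⁻¹' (Prod.fst ⁻¹' A ∩ {p | p.2 = true}))
    _ = withAtom α d s (Prod.fst ⁻¹' A ∩ {p | p.2 = true}) := by
        rw [← h, Measure.map_apply hf ((measurable_fst hA).inter hreal)]
    _ = α A := by
        rw [withAtom_apply _ _ _ ((measurable_fst hA).inter hreal)]
        simp [Set.preimage]

lemma add_le_withAtom (α : Measure S) (d : ENNReal) {s : S} {A : Set S} {D : Set (S × Bool)}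
    (hA : ∀ a ∈ A, (a, true) ∈ D) (hs : (s, false) ∈ D) : α A + d ≤ withAtom α d s D := by
  simp only [withAtom, Measure.add_apply, Measure.smul_apply, smul_eq_mul,
    Measure.dirac_apply_of_mem hs, mul_one]
  gcongr
  exact (measure_mono hA).trans
    (Measure.le_map_apply (by fun_prop : Measurable fun s : S => (s, true)).aemeasurable D)

lemma hallCondition_withAtom [TopologicalSpace S] [T2Space S] [OpensMeasurableSpace S]
    {R : SetRel S T} {α : Measure S} {α' : Measure T} {d : ENNReal}
    (hall : ∀ K, IsCompact K → α K ≤ α' (R.image K) + d) (hmass : α Set.univ = α' Set.univ)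
    (s : S) (t : T) :
    HallCondition (withUniversalPartner R) (withAtom α d s) (withAtom α' d t) := by
  intro K hK
  by_cases hfalse : ∃ s, (s, false) ∈ K
  · obtain ⟨s', hs'⟩ := hfalse
    have huniv : (withUniversalPartner R).image K = Set.univ :=
      Set.eq_univ_of_forall fun q => ⟨_, hs', fun h => by simp at h⟩
    rw [huniv, withAtom_univ, ← hmass, ← withAtom_univ α d s]
    exact measure_mono K.subset_univ
  · rcases K.eq_empty_or_nonempty with rfl | ⟨p, hp⟩
    · simp
    push Not at hfalse
    have hKtrue : IsCompact {s | (s, true) ∈ K} := by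
      convert hK.image continuous_fst using 1
      ext s
      refine ⟨fun h => ⟨_, h, rfl⟩, ?_⟩
      rintro ⟨⟨s, _ | _⟩, h, rfl⟩
      exacts [absurd h (hfalse s), h]
    calc withAtom α d s K = α {s | (s, true) ∈ K} := by
          rw [withAtom_apply _ _ _ hK.isClosed.measurableSet,
            Set.indicator_of_notMem (hfalse s), mul_zero, add_zero]
          rfl
      _ ≤ α' (R.image {s | (s, true) ∈ K}) + d := hall _ hKtrue
      _ ≤ withAtom α' d t ((withUniversalPartner R).image K) := by
          refine add_le_withAtom α' d ?_ ⟨p, hp, fun _ h => by simp at h⟩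
          rintro t ⟨s, hs, hst⟩
          exact ⟨_, hs, fun _ _ => hst⟩

end Deficiency

/-- The mass that cannot be transported along `R` is sent to extra partners of mass `d`, to which
Strassen's theorem applies. -/
theorem exists_partial_coupling {S T : Type*} [TopologicalSpace S] [PolishSpace S]
    [MeasurableSpace S] [BorelSpace S] [TopologicalSpace T] [PolishSpace T] [MeasurableSpace T]
    [BorelSpace T] {R : SetRel S T} (hR : IsClosed R)
    {α : Measure S} {α' : Measure T} [IsFiniteMeasure α] [IsFiniteMeasure α'] {d : NNReal}
    (hall : ∀ K, IsCompact K → α K ≤ α' (R.image K) + d) (hmass : α Set.univ = α' Set.univ) :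
    ∃ (s : Measure (S × T)) (ν : Measure S) (ν' : Measure T),
      s Rᶜ = 0 ∧ s.fst + ν = α ∧ s.snd + ν' = α' ∧ ν Set.univ ≤ d := by
  rcases eq_zero_or_neZero α with rfl | hα
  · exact ⟨0, 0, α', by simp, by simp, by simp, by simp⟩
  have hα' : NeZero α' := ⟨fun h => hα.out (Measure.measure_univ_eq_zero.1 (by rw [hmass, h]; rfl))⟩
  obtain ⟨s₀⟩ := α.nonempty_of_neZero
  obtain ⟨t₀⟩ := α'.nonempty_of_neZero
  obtain ⟨γ, _, hγ₁, hγ₂, hγR⟩ := (hallCondition_withAtom hall hmass s₀ t₀).exists_coupling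
    (isClosed_withUniversalPartner hR) (by rw [withAtom_univ, withAtom_univ, hmass])
  have hm₁ : MeasurableSet {p : (S × Bool) × T × Bool | p.1.2 = true} :=
    (measurable_snd.comp measurable_fst) (.singleton _)
  have hm₂ : MeasurableSet {p : (S × Bool) × T × Bool | p.2.2 = true} :=
    (measurable_snd.comp measurable_snd) (.singleton _)
  have hα : (γ.restrict {p | p.1.2 = true}).map (fun p => p.1.1) = α :=
    map_restrict_of_map_eq_withAtom measurable_fst hγ₁
  have hα' : (γ.restrict {p | p.2.2 = true}).map (fun p => p.2.1) = α' :=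
    map_restrict_of_map_eq_withAtom measurable_snd hγ₂
  refine ⟨(γ.restrict ({p | p.1.2 = true} ∩ {p | p.2.2 = true})).map fun p => (p.1.1, p.2.1),
    (γ.restrict ({p | p.1.2 = true} \ {p | p.2.2 = true})).map fun p => p.1.1,
    (γ.restrict ({p | p.2.2 = true} \ {p | p.1.2 = true})).map fun p => p.2.1, ?_, ?_, ?_, ?_⟩
  · rw [Measure.map_apply (by fun_prop) hR.measurableSet.compl,
      Measure.restrict_apply' (hm₁.inter hm₂)]
    refine measure_mono_null ?_ hγR
    rintro p ⟨hp, hp₁, hp₂⟩ hpR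
    exact hp (hpR hp₁ hp₂)
  · rw [Measure.fst, Measure.map_map measurable_fst (by fun_prop)]
    exact (Measure.map_add _ _ (by fun_prop)).symm.trans
      ((congrArg _ (Measure.restrict_inter_add_sdiff _ hm₂)).trans hα)
  · rw [Measure.snd, Measure.map_map measurable_snd (by fun_prop), Set.inter_comm]
    exact (Measure.map_add _ _ (by fun_prop)).symm.trans
      ((congrArg _ (Measure.restrict_inter_add_sdiff _ hm₁)).trans hα')
  · rw [Measure.map_apply (by fun_prop) .univ, Set.preimage_univ, Measure.restrict_apply_univ]
    calc γ ({p | p.1.2 = true} \ {p | p.2.2 = true})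
      _ ≤ γ.snd (Prod.snd ⁻¹' {false}) := by
          rw [Measure.snd, Measure.map_apply measurable_snd (measurable_snd (.singleton _))]
          exact measure_mono fun p hp => Bool.eq_false_of_not_eq_true hp.2
      _ = d := by
          rw [hγ₂, withAtom_apply _ _ _ (measurable_snd (.singleton _))]
          simp [Set.preimage]

lemma isClosed_relImage_of_isCompact {S T : Type*} [TopologicalSpace S] [TopologicalSpace T]
    {R : SetRel S T} (hR : IsClosed R) {K : Set S} (hK : IsCompact K) : IsClosed (R.image K) := by
  have := isCompact_iff_compactSpace.1 hK
  have hRK : IsClosed ((fun p : K × T => ((p.1 : S), p.2)) ⁻¹' R) := hR.preimage (by fun_prop)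
  convert isClosedMap_snd_of_compactSpace _ hRK using 1
  ext t
  simp only [SetRel.image, Set.mem_ofPred_eq, Set.mem_image, Set.mem_preimage, Prod.exists,
    exists_eq_right, Subtype.exists, exists_prop]

section Matching

/-- The order relation `M = {(x, y) : x ⪯ y}`. -/
abbrev leRel (E : Type*) [Preorder E] : SetRel E E := {p | p.1 ≤ p.2}

lemma subset_image_leRel {E : Type*} [Preorder E] (K : Set E) : K ⊆ (leRel E).image K :=
  fun x hx => ⟨x, hx, le_refl x⟩

lemma isUpperSet_image_leRel {E : Type*} [Preorder E] (K : Set E) :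
    IsUpperSet ((leRel E).image K) := by
  rintro y z hyz ⟨x, hx, hxy⟩
  exact ⟨x, hx, le_trans hxy hyz⟩

lemma isClosed_leRel {E : Type*} [TopologicalSpace E] [Preorder E] [OrderClosedTopology E] :
    IsClosed (leRel E) :=
  isClosed_le continuous_fst continuous_snd

variable {E : Type*} [MeasurableSpace E] [Preorder E]

lemma measurableSet_leRel [TopologicalSpace E] [OrderClosedTopology E] [BorelSpace E]
    [SecondCountableTopology E] : MeasurableSet (leRel E) :=
  isClosed_leRel.measurableSet

/-- The largest excess `α I - α' I` over measurable upper sets `I`; it measures how far `α` is from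
being stochastically smaller than `α'`. -/
noncomputable def upperGap (α α' : Measure E) : ENNReal :=
  ⨆ (I : Set E) (_ : MeasurableSet I) (_ : IsUpperSet I), α I - α' I

lemma le_add_upperGap (α α' : Measure E) {I : Set E} (hI : MeasurableSet I) (hup : IsUpperSet I) :
    α I ≤ α' I + upperGap α α' :=
  tsub_le_iff_left.1 (le_iSup₂_of_le I hI (le_iSup_of_le hup le_rfl))

lemma upperGap_le_iff {α α' : Measure E} {d : ENNReal} :
    upperGap α α' ≤ d ↔ ∀ I, MeasurableSet I → IsUpperSet I → α I ≤ α' I + d := by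
  simp only [upperGap, iSup_le_iff, tsub_le_iff_left]

lemma upperGap_le_univ (α α' : Measure E) : upperGap α α' ≤ α Set.univ :=
  upperGap_le_iff.2 fun _ _ _ => (measure_mono (Set.subset_univ _)).trans le_add_self

/-- Weak duality: mass that is transported upwards does not contribute to the gap. -/
lemma upperGap_fst_add_le {s : Measure (E × E)} (hs : s (leRel E)ᶜ = 0) (ν : Measure E)
    {α' : Measure E} (hα' : s.snd ≤ α') : upperGap (s.fst + ν) α' ≤ ν Set.univ := by
  refine upperGap_le_iff.2 fun I hI hup => ?_
  rw [Measure.add_apply]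
  refine add_le_add ?_ (measure_mono (Set.subset_univ I))
  calc s.fst I = s (Prod.fst ⁻¹' I) := Measure.fst_apply hI
    _ ≤ s (Prod.snd ⁻¹' I) := measure_mono_ae <| by
        filter_upwards [(mem_ae_iff.2 hs : ∀ᵐ p ∂s, p ∈ leRel E)] with p hp hpI
        exact hup hp hpI
    _ = s.snd I := (Measure.snd_apply hI).symm
    _ ≤ α' I := hα' I

/-- `s` matches as much as possible of the mass of `α` with mass of `α'` lying above it; `ν` and
`ν'` are what remains unmatched. By duality the unmatched mass is at least `upperGap α α'`. -/
structure IsMaximalMatching (α α' : Measure E) (s : Measure (E × E)) (ν ν' : Measure E) :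
    Prop where
  supported : s (leRel E)ᶜ = 0
  fst_add : s.fst + ν = α
  snd_add : s.snd + ν' = α'
  residual_le : ν Set.univ ≤ upperGap α α'

theorem exists_isMaximalMatching [TopologicalSpace E] [PolishSpace E] [BorelSpace E]
    [OrderClosedTopology E] (α α' : Measure E) [IsFiniteMeasure α] [IsFiniteMeasure α']
    (hmass : α Set.univ = α' Set.univ) : ∃ s ν ν', IsMaximalMatching α α' s ν ν' := by
  have htop : upperGap α α' ≠ ⊤ :=
    ne_top_of_le_ne_top (measure_ne_top α _) (upperGap_le_univ α α')
  obtain ⟨s, ν, ν', hs, h₁, h₂, hν⟩ := exists_partial_coupling isClosed_leRel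
      (d := (upperGap α α').toNNReal) (fun K hK => by
    rw [ENNReal.coe_toNNReal htop]
    exact (measure_mono (subset_image_leRel K)).trans (le_add_upperGap α α'
      (isClosed_relImage_of_isCompact isClosed_leRel hK).measurableSet
      (isUpperSet_image_leRel K))) hmass
  exact ⟨s, ν, ν', hs, h₁, h₂, hν.trans_eq (ENNReal.coe_toNNReal htop)⟩

namespace IsMaximalMatching

variable {α α' ν ν' : Measure E} {s : Measure (E × E)}

lemma residual_le_left (h : IsMaximalMatching α α' s ν ν') : ν ≤ α :=
  h.fst_add ▸ Measure.le_add_left le_rfl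

lemma residual_le_right (h : IsMaximalMatching α α' s ν ν') : ν' ≤ α' :=
  h.snd_add ▸ Measure.le_add_left le_rfl

lemma matched_univ_le (h : IsMaximalMatching α α' s ν ν') : s Set.univ ≤ α Set.univ := by
  rw [← Measure.fst_univ, ← h.fst_add]
  exact Measure.le_add_right le_rfl _

/-- Otherwise adding `t` to `s` would violate weak duality. -/
lemma eq_zero_of_le [IsFiniteMeasure α] (h : IsMaximalMatching α α' s ν ν') {t : Measure (E × E)}
    (ht : t (leRel E)ᶜ = 0) (hfst : t.fst ≤ ν) (hsnd : t.snd ≤ ν') : t = 0 := by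
  have : IsFiniteMeasure ν := isFiniteMeasure_of_le α h.residual_le_left
  have : IsFiniteMeasure t.fst := isFiniteMeasure_of_le ν hfst
  have hsub : t.fst + (ν - t.fst) = ν := by rw [add_comm, Measure.sub_add_cancel_of_le hfst]
  have hα : (s + t).fst + (ν - t.fst) = α := by
    rw [Measure.fst_add, add_assoc, hsub, h.fst_add]
  have hle : t Set.univ + (ν - t.fst) Set.univ ≤ 0 + (ν - t.fst) Set.univ :=
    calc t Set.univ + (ν - t.fst) Set.univ = ν Set.univ := by
          rw [← Measure.fst_univ, ← Measure.add_apply, hsub]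
      _ ≤ upperGap ((s + t).fst + (ν - t.fst)) α' := hα.symm ▸ h.residual_le
      _ ≤ 0 + (ν - t.fst) Set.univ := by
          rw [zero_add]
          refine upperGap_fst_add_le (by simp [h.supported, ht]) _ ?_
          rw [Measure.snd_add, ← h.snd_add]
          exact add_le_add_right hsnd _
  exact Measure.measure_univ_eq_zero.1
    (nonpos_iff_eq_zero.1 (ENNReal.le_of_add_le_add_right (measure_ne_top _ _) hle))

end IsMaximalMatching

end Matching

section KernelStrassen

variable {Z S T : Type*}

/-- The relation `R` between points of the same fibre over `Z`. -/
def fibreRel (Z : Type*) (R : SetRel S T) : SetRel (Z × S) (Z × T) :=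
  {p | p.1.1 = p.2.1 ∧ (p.1.2, p.2.2) ∈ R}

variable [TopologicalSpace Z] [TopologicalSpace S] [TopologicalSpace T]

lemma isClosed_fibreRel [T2Space Z] {R : SetRel S T} (hR : IsClosed R) :
    IsClosed (fibreRel Z R) :=
  (isClosed_eq (by fun_prop) (by fun_prop)).inter (hR.preimage (by fun_prop :
    Continuous fun p : (Z × S) × Z × T => (p.1.2, p.2.2)))

lemma isCompact_preimage_prodMk [T1Space Z] {K : Set (Z × S)} (hK : IsCompact K) (z : Z) :
    IsCompact (Prod.mk z ⁻¹' K) := by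
  convert (hK.inter_right (isClosed_singleton (x := z) |>.preimage continuous_fst)).image
    continuous_snd using 1
  ext s
  simp

variable [MeasurableSpace Z] [MeasurableSpace S] [MeasurableSpace T] [PolishSpace Z] [BorelSpace Z]
  [PolishSpace S] [BorelSpace S] [PolishSpace T] [BorelSpace T] {R : SetRel S T}

lemma hallCondition_compProd (hR : IsClosed R) {π : Measure Z} [SFinite π] {κ : Kernel Z S}
    {κ' : Kernel Z T} [IsSFiniteKernel κ] [IsSFiniteKernel κ']
    (hall : ∀ᵐ z ∂π, HallCondition R (κ z) (κ' z)) :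
    HallCondition (fibreRel Z R) (π ⊗ₘ κ) (π ⊗ₘ κ') := by
  intro K hK
  rw [Measure.compProd_apply hK.isClosed.measurableSet, Measure.compProd_apply
    (isClosed_relImage_of_isCompact (isClosed_fibreRel hR) hK).measurableSet]
  refine lintegral_mono_ae ?_
  filter_upwards [hall] with z hz
  refine (hz _ (isCompact_preimage_prodMk hK z)).trans (measure_mono ?_)
  rintro t ⟨s, hs, hst⟩
  exact ⟨(z, s), hs, rfl, hst⟩

/-- The couplings of `κ z` and `κ' z` are chosen measurably in `z` by disintegrating a coupling of
the joint laws along the fibres. -/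
theorem exists_kernel_coupling [Nonempty S] [Nonempty T] (hR : IsClosed R) (π : Measure Z)
    [IsFiniteMeasure π] (κ : Kernel Z S) (κ' : Kernel Z T) [IsMarkovKernel κ] [IsMarkovKernel κ']
    (hall : ∀ᵐ z ∂π, HallCondition R (κ z) (κ' z)) :
    ∃ K : Kernel Z (S × T), IsMarkovKernel K ∧
      ∀ᵐ z ∂π, K z Rᶜ = 0 ∧ (K z).fst = κ z ∧ (K z).snd = κ' z := by
  obtain ⟨γ, hγ, hγ₁, hγ₂, hγR⟩ := (hallCondition_compProd hR hall).exists_coupling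
    (isClosed_fibreRel hR) (by simp only [Measure.compProd_apply_univ])
  have hγae : ∀ᵐ w ∂γ, w ∈ fibreRel Z R := mem_ae_iff.2 hγR
  have hf : Measurable fun w : (Z × S) × Z × T => (w.1.1, w.1.2, w.2.2) := by fun_prop
  set ρ : Measure (Z × S × T) := γ.map fun w => (w.1.1, w.1.2, w.2.2) with hρ
  have hρfst : ρ.fst = π := by
    rw [← Measure.fst_compProd π κ, ← hγ₁, Measure.fst, Measure.fst, Measure.fst,
      Measure.map_map measurable_fst hf, Measure.map_map measurable_fst measurable_fst]
    rfl
  have hdis : π ⊗ₘ ρ.condKernel = ρ := hρfst ▸ ρ.disintegrate ρ.condKernel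
  have hfst : π ⊗ₘ ρ.condKernel.map Prod.fst = π ⊗ₘ κ := by
    rw [Measure.compProd_map measurable_fst, hdis, hρ, Measure.map_map (by fun_prop) hf, ← hγ₁]
    rfl
  have hsnd : π ⊗ₘ ρ.condKernel.map Prod.snd = π ⊗ₘ κ' := by
    rw [Measure.compProd_map measurable_snd, hdis, hρ, Measure.map_map (by fun_prop) hf, ← hγ₂]
    refine Measure.map_congr ?_
    filter_upwards [hγae] with w hw using Prod.ext hw.1 rfl
  have hsupp : ∀ᵐ z ∂π, ∀ᵐ p ∂ρ.condKernel z, p ∈ R := by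
    have hm : MeasurableSet {x : Z × S × T | x.2 ∈ R} := measurable_snd hR.measurableSet
    rw [← Measure.ae_compProd_iff hm, hdis, ae_map_iff hf.aemeasurable hm]
    filter_upwards [hγae] with w hw using hw.2
  refine ⟨ρ.condKernel, inferInstance, ?_⟩
  filter_upwards [hsupp, Kernel.ae_eq_of_compProd_eq hfst, Kernel.ae_eq_of_compProd_eq hsnd]
    with z hz h₁ h₂
  rw [Kernel.map_apply _ measurable_fst] at h₁
  rw [Kernel.map_apply _ measurable_snd] at h₂
  exact ⟨hz, h₁, h₂⟩

end KernelStrassen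

section MarkovChains

variable {Ω S : Type*}

/-- The trajectory `(Z 0, …, Z n)` of a process up to time `n`. -/
def past (Z : ℕ → Ω → S) (n : ℕ) (ω : Ω) : Fin (n + 1) → S := fun i => Z i ω

/-- The event that the process `Z` stays in the sets `s 0, …, s n` at the times `0, …, n`. -/
def staysIn (Z : ℕ → Ω → S) (s : ℕ → Set S) (n : ℕ) : Set Ω := {ω | ∀ i ≤ n, Z i ω ∈ s i}

lemma staysIn_zero (Z : ℕ → Ω → S) (s : ℕ → Set S) : staysIn Z s 0 = Z 0 ⁻¹' s 0 := by
  simp [staysIn, Set.preimage]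

lemma staysIn_succ (Z : ℕ → Ω → S) (s : ℕ → Set S) (n : ℕ) :
    staysIn Z s (n + 1) = Z (n + 1) ⁻¹' s (n + 1) ∩ staysIn Z s n := by
  ext ω
  simp only [staysIn, Nat.le_succ_iff, Set.mem_inter_iff, Set.mem_preimage, Set.mem_ofPred_eq]
  grind

lemma staysIn_eq_preimage_past (Z : ℕ → Ω → S) (s : ℕ → Set S) (n : ℕ) :
    staysIn Z s n = past Z n ⁻¹' Set.univ.pi fun i => s i := by
  ext ω
  simp only [staysIn, past, Set.mem_ofPred_eq, Set.mem_preimage, Set.mem_univ_pi,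
    Fin.forall_iff, Nat.lt_succ_iff]

variable [MeasurableSpace Ω] [MeasurableSpace S] {Z : ℕ → Ω → S}

lemma measurable_past (hZ : ∀ n, Measurable (Z n)) (n : ℕ) : Measurable (past Z n) :=
  measurable_pi_lambda _ fun i => hZ i

lemma measurableSet_staysIn (hZ : ∀ n, Measurable (Z n)) {s : ℕ → Set S}
    (hs : ∀ i, MeasurableSet (s i)) (n : ℕ) : MeasurableSet (staysIn Z s n) :=
  staysIn_eq_preimage_past Z s n ▸ measurable_past hZ n (.univ_pi fun i => hs i)

lemma map_staysIn_succ (hZ : ∀ n, Measurable (Z n)) {s : ℕ → Set S}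
    (hs : ∀ i, MeasurableSet (s i)) (μ : Measure Ω) (n : ℕ) :
    (μ.restrict (staysIn Z s (n + 1))).map (Z (n + 1)) =
      ((μ.restrict (staysIn Z s n)).map (Z (n + 1))).restrict (s (n + 1)) := by
  rw [staysIn_succ, Measure.restrict_map (hZ _) (hs _), Measure.restrict_restrict (hZ _ (hs _))]

variable {μ : Measure Ω} [IsFiniteMeasure μ] {Q : ℕ → Kernel S S} [∀ n, IsMarkovKernel (Q n)]

instance isFiniteMeasure_withDensity_kernel_apply (n : ℕ) (A : Set S) :
    IsFiniteMeasure (μ.withDensity fun ω => Q n (Z n ω) A) :=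
  isFiniteMeasure_withDensity ((lintegral_mono fun _ => prob_le_one).trans_lt
    (by simp : ∫⁻ _, 1 ∂μ < ⊤)).ne

lemma mcStep_iff_map_past (hZ : ∀ n, Measurable (Z n)) :
    MCStep μ Q Z ↔ ∀ n A, MeasurableSet A → (μ.restrict (Z (n + 1) ⁻¹' A)).map (past Z n) =
      (μ.withDensity fun ω => Q n (Z n ω) A).map (past Z n) := by
  refine forall_congr' fun n => forall₂_congr fun A hA => ?_
  have hpast := measurable_past hZ n
  have hQ : Measurable fun ω => Q n (Z n ω) A := (Kernel.measurable_coe _ hA).comp (hZ n)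
  have hleft (φ : (Fin (n + 1) → S) → ℝ) (hφ : Measurable φ) :
      ∫ ω, φ (past Z n ω) * A.indicator (fun _ => (1 : ℝ)) (Z (n + 1) ω) ∂μ =
        ∫ v, φ v ∂((μ.restrict (Z (n + 1) ⁻¹' A)).map (past Z n)) := by
    rw [integral_map hpast.aemeasurable hφ.aestronglyMeasurable,
      ← integral_indicator (hZ _ hA)]
    refine integral_congr_ae (ae_of_all _ fun ω => ?_)
    by_cases h : Z (n + 1) ω ∈ A <;> simp [h]
  have hright (φ : (Fin (n + 1) → S) → ℝ) (hφ : Measurable φ) :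
      ∫ ω, φ (past Z n ω) * (Q n (Z n ω) A).toReal ∂μ =
        ∫ v, φ v ∂((μ.withDensity fun ω => Q n (Z n ω) A).map (past Z n)) := by
    rw [integral_map hpast.aemeasurable hφ.aestronglyMeasurable,
      integral_withDensity_eq_integral_toReal_smul hQ (ae_of_all _ fun _ => measure_lt_top _ _)]
    simp only [smul_eq_mul, mul_comm]
  constructor
  · intro h
    ext D hD
    have hD₁ := h (D.indicator 1) (measurable_one.indicator hD) fun v => by
      by_cases hv : v ∈ D <;> simp [hv]
    rw [← measureReal_eq_measureReal_iff, ← integral_indicator_one hD, ← integral_indicator_one hD,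
      ← hleft _ (measurable_one.indicator hD), ← hright _ (measurable_one.indicator hD)]
    exact hD₁
  · intro h φ hφ _
    exact (hleft φ hφ).trans (h ▸ (hright φ hφ).symm)

theorem mcStep_iff_staysIn (hZ : ∀ n, Measurable (Z n)) :
    MCStep μ Q Z ↔ ∀ n (s : ℕ → Set S), (∀ i, MeasurableSet (s i)) →
      (μ.restrict (staysIn Z s n)).map (Z (n + 1)) =
        Q n ∘ₘ (μ.restrict (staysIn Z s n)).map (Z n) := by
  have hstay (n : ℕ) (s : ℕ → Set S) (hs : ∀ i, MeasurableSet (s i)) (A : Set S)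
      (hA : MeasurableSet A) : (μ.restrict (staysIn Z s n)).map (Z (n + 1)) A =
        (μ.restrict (Z (n + 1) ⁻¹' A)).map (past Z n) (Set.univ.pi fun i => s i) := by
    rw [Measure.map_apply (hZ _) hA, Measure.map_apply (measurable_past hZ n)
      (.univ_pi fun i => hs i), Measure.restrict_apply (hZ _ hA), ← staysIn_eq_preimage_past,
      Measure.restrict_apply (measurableSet_staysIn hZ hs n), Set.inter_comm]
  have hbind (n : ℕ) (s : ℕ → Set S) (hs : ∀ i, MeasurableSet (s i)) (A : Set S)
      (hA : MeasurableSet A) : (Q n ∘ₘ (μ.restrict (staysIn Z s n)).map (Z n)) A =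
        (μ.withDensity fun ω => Q n (Z n ω) A).map (past Z n) (Set.univ.pi fun i => s i) := by
    rw [Measure.bind_apply hA (Q n).aemeasurable,
      lintegral_map (Kernel.measurable_coe _ hA) (hZ n), Measure.map_apply (measurable_past hZ n)
      (.univ_pi fun i => hs i), ← staysIn_eq_preimage_past,
      withDensity_apply _ (measurableSet_staysIn hZ hs n)]
  rw [mcStep_iff_map_past hZ]
  constructor
  · intro h n s hs
    ext A hA
    rw [hstay n s hs A hA, hbind n s hs A hA, h n A hA]
  · intro h n A hA
    have hrect (t : Fin (n + 1) → Set S) (ht : ∀ i, MeasurableSet (t i)) :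
        (μ.restrict (Z (n + 1) ⁻¹' A)).map (past Z n) (Set.univ.pi t) =
          (μ.withDensity fun ω => Q n (Z n ω) A).map (past Z n) (Set.univ.pi t) := by
      have hs : ∀ i, MeasurableSet (t (Fin.ofNat (n + 1) i)) := fun i => ht _
      have := congrArg (· A) (h n _ hs)
      simpa only [hstay n _ hs A hA, hbind n _ hs A hA, Fin.ofNat_val_eq_self] using this
    refine ext_of_generate_finite _ generateFrom_pi.symm isPiSystem_pi ?_ ?_
    · rintro _ ⟨t, ht, rfl⟩
      exact hrect t fun i => ht i (Set.mem_univ i)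
    · simpa only [Set.pi_univ] using hrect (fun _ => Set.univ) fun _ => .univ

end MarkovChains

section Ville

variable {Ω S : Type*} [MeasurableSpace Ω] [MeasurableSpace S]

lemma mul_measure_compl_lt_add_setLIntegral_le (μ : Measure S) {f : S → ENNReal}
    (hf : Measurable f) (r : ENNReal) :
    r * μ {z | f z < r}ᶜ + ∫⁻ z in {z | f z < r}, f z ∂μ ≤ ∫⁻ z, f z ∂μ := by
  have hs : MeasurableSet {z | f z < r} := measurableSet_lt hf measurable_const
  rw [← lintegral_add_compl (μ := μ) f hs, add_comm, ← setLIntegral_const]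
  exact add_le_add_right (setLIntegral_mono' hs.compl fun z hz => not_lt.1 hz) _

lemma measure_compl_staysIn_succ_le (μ : Measure Ω) {Z : ℕ → Ω → S} (hZ : ∀ n, Measurable (Z n))
    {s : ℕ → Set S} (hs : ∀ i, MeasurableSet (s i)) (n : ℕ) :
    μ (staysIn Z s (n + 1))ᶜ ≤
      μ (staysIn Z s n)ᶜ + (μ.restrict (staysIn Z s n)).map (Z (n + 1)) (s (n + 1))ᶜ := by
  rw [Measure.map_apply (hZ _) (hs _).compl, Measure.restrict_apply (hZ _ (hs _).compl),
    staysIn_succ]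
  refine (measure_mono fun ω hω => ?_).trans (measure_union_le _ _)
  by_cases h : ω ∈ staysIn Z s n
  · exact Or.inr ⟨fun h' => hω ⟨h', h⟩, h⟩
  · exact Or.inl h

/-- Ville's maximal inequality for the supermartingale `F k (Z k)`. -/
theorem MCStep.mul_measure_exists_le {μ : Measure Ω} [IsFiniteMeasure μ] {Q : ℕ → Kernel S S}
    [∀ n, IsMarkovKernel (Q n)] {Z : ℕ → Ω → S} (hZ : ∀ n, Measurable (Z n)) (hQ : MCStep μ Q Z)
    {F : ℕ → S → ENNReal} (hF : ∀ k, Measurable (F k)) {n : ℕ}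
    (hsuper : ∀ k < n, ∀ z, ∫⁻ y, F (k + 1) y ∂(Q k z) ≤ F k z) (r : ENNReal) :
    r * μ {ω | ∃ k ≤ n, r ≤ F k (Z k ω)} ≤ ∫⁻ ω, F 0 (Z 0 ω) ∂μ := by
  let s : ℕ → Set S := fun k => {z | F k z < r}
  have hs (k : ℕ) : MeasurableSet (s k) := measurableSet_lt (hF k) measurable_const
  let Λ : ℕ → Measure S := fun k => (μ.restrict (staysIn Z s k)).map (Z k)
  have hinv : ∀ k ≤ n, r * μ (staysIn Z s k)ᶜ + ∫⁻ z, F k z ∂(Λ k) ≤ ∫⁻ ω, F 0 (Z 0 ω) ∂μ := by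
    intro k hk
    induction k with
    | zero =>
      rw [← lintegral_map (hF 0) (hZ 0)]
      convert mul_measure_compl_lt_add_setLIntegral_le (μ.map (Z 0)) (hF 0) r using 2
      · rw [staysIn_zero, Measure.map_apply (hZ 0) (hs 0).compl, Set.preimage_compl]
      · simp only [Λ, staysIn_zero, ← Measure.restrict_map (hZ 0) (hs 0), s]
    | succ k ih =>
      let ν := (μ.restrict (staysIn Z s k)).map (Z (k + 1))
      have hν : ν = Q k ∘ₘ Λ k := (mcStep_iff_staysIn hZ).1 hQ k s hs
      have hstep : ∫⁻ z, F (k + 1) z ∂ν ≤ ∫⁻ z, F k z ∂(Λ k) := by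
        rw [hν, Measure.lintegral_bind (Q k).aemeasurable (hF _).aemeasurable]
        exact lintegral_mono (hsuper k hk)
      have hΛ : Λ (k + 1) = ν.restrict (s (k + 1)) := map_staysIn_succ hZ hs μ k
      calc r * μ (staysIn Z s (k + 1))ᶜ + ∫⁻ z, F (k + 1) z ∂(Λ (k + 1))
          ≤ r * (μ (staysIn Z s k)ᶜ + ν (s (k + 1))ᶜ) + ∫⁻ z in s (k + 1), F (k + 1) z ∂ν := by
            rw [hΛ]
            gcongr
            exact measure_compl_staysIn_succ_le μ hZ hs k
        _ = r * μ (staysIn Z s k)ᶜ +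
              (r * ν (s (k + 1))ᶜ + ∫⁻ z in s (k + 1), F (k + 1) z ∂ν) := by ring
        _ ≤ r * μ (staysIn Z s k)ᶜ + ∫⁻ z, F k z ∂(Λ k) := by
            gcongr
            exact (mul_measure_compl_lt_add_setLIntegral_le ν (hF _) r).trans hstep
        _ ≤ _ := ih (Nat.le_of_succ_le hk)
  refine le_trans ?_ (le_self_add.trans (hinv n le_rfl))
  gcongr
  rintro ω ⟨k, hk, h⟩ hω
  exact (hω k hk).not_ge h

lemma exists_lt_measure_exists_le {μ : Measure Ω} [IsProbabilityMeasure μ] {p : ℕ → Ω → Prop}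
    (hp : ∀ᵐ ω ∂μ, ∃ n, p n ω) {c : ENNReal} (hc : c < 1) :
    ∃ n, c < μ {ω | ∃ k ≤ n, p k ω} := by
  let H : ℕ → Set Ω := fun n => {ω | ∃ k ≤ n, p k ω}
  have hH : Monotone H := fun m n hmn ω ⟨k, hk, h⟩ => ⟨k, hk.trans hmn, h⟩
  have hunion : μ (⋃ n, H n) = 1 := by
    rw [← measure_univ (μ := μ)]
    refine measure_congr (eventuallyEq_univ.2 ?_)
    filter_upwards [hp] with ω ⟨n, hn⟩
    exact Set.mem_iUnion.2 ⟨n, n, le_rfl, hn⟩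
  exact ((hunion ▸ tendsto_measure_iUnion_atTop hH).eventually_const_lt hc).exists

end Ville

section TransitionKernels

variable {E : Type*} [MeasurableSpace E]

lemma kpow_succ (P : Kernel E E) (n : ℕ) : kpow P (n + 1) = P ∘ₖ kpow P n := rfl

lemma kpow_add (P : Kernel E E) (m n : ℕ) : kpow P (m + n) = kpow P m ∘ₖ kpow P n := by
  induction m with
  | zero => rw [Nat.zero_add, kpow, Kernel.id_comp]
  | succ m ih => rw [Nat.succ_add, kpow_succ, ih, kpow_succ, Kernel.comp_assoc]

lemma kpow_one (P : Kernel E E) : kpow P 1 = P := Kernel.comp_id P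

instance isMarkovKernel_kpow (P : Kernel E E) [IsMarkovKernel P] (n : ℕ) :
    IsMarkovKernel (kpow P n) := by
  induction n with
  | zero => rw [kpow]; infer_instance
  | succ n ih => rw [kpow_succ]; infer_instance

lemma lintegral_kpow_eq_kpow_succ (P : Kernel E E) (n : ℕ) (x : E) {I : Set E}
    (hI : MeasurableSet I) : ∫⁻ z, kpow P n z I ∂(P x) = kpow P (n + 1) x I := by
  rw [kpow_add, kpow_one, Kernel.comp_apply' _ _ _ hI]

lemma MonotoneKernel.stochDom_kpow [Preorder E] {P : Kernel E E} [IsMarkovKernel P]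
    (hP : MonotoneKernel P) (n : ℕ) {x y : E} (hxy : x ≤ y) :
    StochDom (kpow P n x) (kpow P n y) := by
  induction n generalizing x y with
  | zero =>
    intro I hI hup
    simp only [kpow, Kernel.id_apply, Measure.dirac_apply' _ hI]
    by_cases hx : x ∈ I <;> simp [hx, hup hxy]
  | succ n ih =>
    intro I hI hup
    have hg : Measurable fun z => kpow P n z I := Kernel.measurable_coe _ hI
    have hint := hP (fun z => (kpow P n z I).toReal) hg.ennreal_toReal
      (fun a b hab => ENNReal.toReal_mono (measure_ne_top _ _) (ih hab I hI hup))
      (fun z => ⟨ENNReal.toReal_nonneg, measureReal_le_one⟩) hxy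
    simp only [integral_toReal hg.aemeasurable (ae_of_all _ fun _ => measure_lt_top _ _),
      lintegral_kpow_eq_kpow_succ P n _ hI] at hint
    exact (ENNReal.toReal_le_toReal (measure_ne_top _ _) (measure_ne_top _ _)).1 hint

lemma exists_mem_kernel_apply_lt {S T : Type*} [MeasurableSpace S] [MeasurableSpace T]
    {μ : Measure S} {κ : Kernel S T} {D : Set S} {J : Set T} (hJ : MeasurableSet J) {c : ENNReal}
    (h : (κ ∘ₘ μ) J < c * μ D) : ∃ a ∈ D, κ a J < c := by
  by_contra! hD
  refine h.not_ge ?_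
  calc c * μ D ≤ c * μ {a | c ≤ κ a J} := by gcongr; exact hD
    _ ≤ ∫⁻ a, κ a J ∂μ := mul_meas_ge_le_lintegral (Kernel.measurable_coe _ hJ) c
    _ = (κ ∘ₘ μ) J := (Measure.bind_apply hJ κ.aemeasurable).symm

variable [Preorder E] {P : Kernel E E} [IsMarkovKernel P]

/-- If both alternatives failed, the chains would have to pass at time `N` through points
`a ∈ A`, `b ∈ B` from which `Iᶜ`, respectively `I`, is reached with probability below `1/2`,
contradicting `a ≤ b`. -/
lemma MonotoneKernel.le_kpow_compl_or_le_kpow (hP : MonotoneKernel P) {A B : Set E}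
    (hAB : ∀ a ∈ A, ∀ b ∈ B, a ≤ b) {ε : ENNReal} {N : ℕ} {z w : E} (hz : ε ≤ kpow P N z A)
    (hw : ε ≤ kpow P N w B) {m : ℕ} (hm : N ≤ m) {I : Set E} (hI : MeasurableSet I)
    (hup : IsUpperSet I) : 2⁻¹ * ε ≤ kpow P m z Iᶜ ∨ 2⁻¹ * ε ≤ kpow P m w I := by
  obtain ⟨k, rfl⟩ := Nat.exists_eq_add_of_le' hm
  by_contra! hlt
  simp only [kpow_add, Kernel.comp_apply] at hlt
  obtain ⟨a, haA, ha⟩ := exists_mem_kernel_apply_lt hI.compl (hlt.1.trans_le (by gcongr))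
  obtain ⟨b, hbB, hb⟩ := exists_mem_kernel_apply_lt hI (hlt.2.trans_le (by gcongr))
  refine (ENNReal.add_lt_add ((hP.stochDom_kpow k (hAB a haA b hbB) I hI hup).trans_lt hb) ha).ne ?_
  rw [prob_add_prob_compl hI, ENNReal.inv_two_add_inv_two]

/-- Ville's inequality for the martingales `k ↦ kpow P (n - k) (X k) Iᶜ` and
`k ↦ kpow P (n - k) (Y k) I`, one of which becomes large once `(X, Y)` visits `H`. -/
lemma IsMarkovianCoupling.mul_measure_exists_mem_le (hP : MonotoneKernel P) {H : Set (E × E)}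
    {A B : Set E} (hAB : ∀ a ∈ A, ∀ b ∈ B, a ≤ b) {ε : ENNReal} {N : ℕ}
    (hA : ∀ p ∈ H, ε ≤ kpow P N p.1 A) (hB : ∀ p ∈ H, ε ≤ kpow P N p.2 B)
    {Ω : Type*} [MeasurableSpace Ω] {μ : Measure Ω} {X Y : ℕ → Ω → E} {x y : E}
    (h : IsMarkovianCoupling P x y μ X Y) {n₁ n : ℕ} (hn : n₁ + N ≤ n) {I : Set E}
    (hI : MeasurableSet I) (hup : IsUpperSet I) :
    2⁻¹ * ε * μ {ω | ∃ k ≤ n₁, (X k ω, Y k ω) ∈ H} ≤ kpow P n x Iᶜ + kpow P n y I := by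
  have hmax {x : E} {X : ℕ → Ω → E} (hX : IsMChain P x μ X) {J : Set E} (hJ : MeasurableSet J) :
      2⁻¹ * ε * μ {ω | ∃ k ≤ n₁, 2⁻¹ * ε ≤ kpow P (n - k) (X k ω) J} ≤ kpow P n x J := by
    obtain ⟨hμ, hXm, hX₀, hstep⟩ := hX
    refine (hstep.mul_measure_exists_le hXm (F := fun k z => kpow P (n - k) z J)
      (fun k => Kernel.measurable_coe _ hJ) (fun k hk z => ?_) _).trans_eq ?_
    · rw [lintegral_kpow_eq_kpow_succ P _ z hJ, show n - (k + 1) + 1 = n - k by omega]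
    · calc ∫⁻ ω, kpow P (n - 0) (X 0 ω) J ∂μ = ∫⁻ _, kpow P n x J ∂μ := by
            refine lintegral_congr_ae ?_
            filter_upwards [hX₀] with ω hω
            rw [hω, Nat.sub_zero]
        _ = kpow P n x J := by rw [lintegral_const, measure_univ, mul_one]
  refine le_trans ?_ (add_le_add (hmax h.1 hI.compl) (hmax h.2.1 hI))
  rw [← mul_add]
  gcongr
  refine (measure_mono ?_).trans (measure_union_le _ _)
  rintro ω ⟨k, hk, hH⟩
  exact (hP.le_kpow_compl_or_le_kpow hAB (hA _ hH) (hB _ hH) (by omega : N ≤ n - k) hI hup).imp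
    (fun h => ⟨k, hk, h⟩) (fun h => ⟨k, hk, h⟩)

theorem MonotoneKernel.exists_eventually_upperGap_le (hP : MonotoneKernel P) {H : Set (E × E)}
    (hH : Achievable P H) {A B : Set E} (hAB : ∀ a ∈ A, ∀ b ∈ B, a ≤ b) {ε : ENNReal} (hε : 0 < ε)
    {N : ℕ} (hA : ∀ p ∈ H, ε ≤ kpow P N p.1 A) (hB : ∀ p ∈ H, ε ≤ kpow P N p.2 B) :
    ∃ q < 1, ∀ x y, ∀ᶠ n in atTop, upperGap (kpow P n x) (kpow P n y) ≤ q := by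
  let d : ENNReal := 2⁻¹ * min ε 1 * 2⁻¹
  have hd : d ≠ 0 := by simp [d, hε.ne']
  refine ⟨1 - d, ENNReal.sub_lt_self ENNReal.one_ne_top one_ne_zero hd, fun x y => ?_⟩
  obtain ⟨Ω, _, μ, X, Y, hXY, hhit⟩ := hH x y
  have := hXY.1.1
  obtain ⟨n₁, hn₁⟩ := exists_lt_measure_exists_le hhit ENNReal.one_half_lt_one
  filter_upwards [eventually_ge_atTop (n₁ + N)] with n hn
  refine upperGap_le_iff.2 fun I hI hup => ?_
  have hdI : d ≤ kpow P n x Iᶜ + kpow P n y I :=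
    (mul_le_mul_right hn₁.le _).trans <| hXY.mul_measure_exists_mem_le hP hAB
      (fun p hp => (min_le_left _ _).trans (hA p hp))
      (fun p hp => (min_le_left _ _).trans (hB p hp)) hn hI hup
  refine le_trans ?_ add_tsub_le_assoc
  refine ENNReal.le_sub_of_add_le_right (ne_top_of_le_ne_top (by finiteness) hdI) ?_
  calc kpow P n x I + d ≤ kpow P n x I + (kpow P n x Iᶜ + kpow P n y I) := by gcongr
    _ = kpow P n y I + 1 := by rw [← add_assoc, prob_add_prob_compl hI, add_comm]

end TransitionKernels

section GapContraction

variable {E F : Type*} [MeasurableSpace E] [MeasurableSpace F]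

lemma measure_comp_mono (κ : Kernel E F) {α β : Measure E} (h : α ≤ β) : κ ∘ₘ α ≤ κ ∘ₘ β := by
  refine Measure.le_iff.2 fun A hA => ?_
  rw [Measure.bind_apply hA κ.aemeasurable, Measure.bind_apply hA κ.aemeasurable]
  exact lintegral_mono' h le_rfl

lemma le_kpow_comp (P : Kernel E E) {ν : ℕ → Measure E} (hν : ∀ m, ν (m + 1) ≤ P ∘ₘ ν m)
    (m n : ℕ) : ν (m + n) ≤ kpow P n ∘ₘ ν m := by
  induction n with
  | zero => exact Measure.id_comp.ge
  | succ n ih =>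
    rw [kpow_succ, ← Measure.comp_assoc]
    exact (hν _).trans (measure_comp_mono P ih)

lemma mul_comp_apply_sub_le_lintegral_prod (κ : Kernel E F) {ν ν' : Measure E} [IsFiniteMeasure ν]
    [IsFiniteMeasure ν'] (hmass : ν Set.univ = ν' Set.univ) {I : Set F} (hI : MeasurableSet I) :
    ν Set.univ * ((κ ∘ₘ ν) I - (κ ∘ₘ ν') I) ≤ ∫⁻ z, κ z.1 I - κ z.2 I ∂(ν.prod ν') := by
  have hκ : Measurable fun z => κ z I := Kernel.measurable_coe κ hI
  have hκ₁ : Measurable fun z : E × E => κ z.1 I := hκ.comp measurable_fst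
  have hκ₂ : Measurable fun z : E × E => κ z.2 I := hκ.comp measurable_snd
  have hfst : ∫⁻ z, κ z.1 I ∂(ν.prod ν') = ν Set.univ * (κ ∘ₘ ν) I := by
    rw [lintegral_prod _ hκ₁.aemeasurable,
      Measure.bind_apply hI κ.aemeasurable]
    simp only [lintegral_const]
    rw [lintegral_mul_const _ hκ, hmass, mul_comm]
  have hsnd : ∫⁻ z, κ z.2 I ∂(ν.prod ν') = ν Set.univ * (κ ∘ₘ ν') I := by
    rw [lintegral_prod _ hκ₂.aemeasurable,
      Measure.bind_apply hI κ.aemeasurable]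
    simp only [lintegral_const, mul_comm]
  rw [ENNReal.mul_sub fun _ _ => measure_ne_top _ _, ← hfst, ← hsnd]
  exact lintegral_sub_le _ _ hκ₂

variable [Preorder F]

lemma upperGap_add_univ_le {α α' β β' : Measure F} [IsFiniteMeasure β'] (hβ : β ≤ α)
    (hβ' : β' ≤ α') : upperGap β β' + β' Set.univ ≤ upperGap α α' + α' Set.univ := by
  suffices h : upperGap β β' ≤ upperGap α α' + (α' - β') Set.univ by
    calc upperGap β β' + β' Set.univ
        ≤ upperGap α α' + (α' - β') Set.univ + β' Set.univ := by gcongr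
      _ = upperGap α α' + α' Set.univ := by
        rw [add_assoc, ← Measure.add_apply, Measure.sub_add_cancel_of_le hβ']
  refine upperGap_le_iff.2 fun I hI hup => ?_
  calc β I ≤ α I := hβ I
    _ ≤ α' I + upperGap α α' := le_add_upperGap α α' hI hup
    _ = (α' - β') I + β' I + upperGap α α' := by
      rw [← Measure.add_apply, Measure.sub_add_cancel_of_le hβ']
    _ ≤ (α' - β') Set.univ + β' I + upperGap α α' := by gcongr; exact Set.subset_univ I
    _ = β' I + (upperGap α α' + (α' - β') Set.univ) := by ring

theorem limsup_upperGap_comp_le {κ : ℕ → Kernel E F} [∀ n, IsMarkovKernel (κ n)] {q : ENNReal}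
    (hκ : ∀ x y, ∀ᶠ n in atTop, upperGap (κ n x) (κ n y) ≤ q) {ν ν' : Measure E}
    [IsFiniteMeasure ν] [IsFiniteMeasure ν'] (hmass : ν Set.univ = ν' Set.univ) :
    limsup (fun n => upperGap (κ n ∘ₘ ν) (κ n ∘ₘ ν')) atTop ≤ q * ν Set.univ := by
  rcases eq_or_ne (ν Set.univ) 0 with h0 | h0
  · have hgap (n : ℕ) : upperGap (κ n ∘ₘ ν) (κ n ∘ₘ ν') = 0 := nonpos_iff_eq_zero.1
      ((upperGap_le_univ _ _).trans_eq (Measure.comp_apply_univ.trans h0))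
    simp [hgap]
  refine le_of_forall_lt fun b hb => ?_
  obtain ⟨b', hbb', hb'⟩ := exists_between hb
  refine hbb'.trans_le ?_
  have hwitness (n : ℕ) : ∃ I, MeasurableSet I ∧ IsUpperSet I ∧
      (b' < upperGap (κ n ∘ₘ ν) (κ n ∘ₘ ν') → b' < (κ n ∘ₘ ν) I - (κ n ∘ₘ ν') I) := by
    by_cases h : b' < upperGap (κ n ∘ₘ ν) (κ n ∘ₘ ν')
    · have h' := h
      simp only [upperGap, lt_iSup_iff] at h'
      obtain ⟨I, hI, hup, hlt⟩ := h'
      exact ⟨I, hI, hup, fun _ => hlt⟩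
    · exact ⟨∅, .empty, isUpperSet_empty, fun h' => absurd h' h⟩
  choose I hI hup hlt using hwitness
  have hfreq : ∃ᶠ n in atTop, ν Set.univ * b' ≤ ∫⁻ z, κ n z.1 (I n) - κ n z.2 (I n) ∂(ν.prod ν') :=
    (frequently_lt_of_lt_limsup (by isBoundedDefault) hb').mono fun n hn =>
      (mul_le_mul_right (hlt n hn).le _).trans
        (mul_comp_apply_sub_le_lintegral_prod (κ n) hmass (hI n))
  refine (ENNReal.mul_le_mul_iff_right h0 (measure_ne_top ν _)).1 ?_
  calc ν Set.univ * b'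
      ≤ limsup (fun n => ∫⁻ z, κ n z.1 (I n) - κ n z.2 (I n) ∂(ν.prod ν')) atTop :=
        le_limsup_of_frequently_le' hfreq
    _ ≤ ∫⁻ z, limsup (fun n => κ n z.1 (I n) - κ n z.2 (I n)) atTop ∂(ν.prod ν') := by
        refine limsup_lintegral_le 1 (fun n => ?_) (fun n => ae_of_all _ fun z => ?_) ?_
        · exact ((Kernel.measurable_coe _ (hI n)).comp measurable_fst).sub
            ((Kernel.measurable_coe _ (hI n)).comp measurable_snd)
        · exact tsub_le_self.trans prob_le_one
        · simp [measure_ne_top]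
    _ ≤ ∫⁻ _, q ∂(ν.prod ν') := by
        refine lintegral_mono fun z => limsup_le_of_le (h := ?_)
        filter_upwards [hκ z.1 z.2] with n hn
        exact tsub_le_iff_left.2 (upperGap_le_iff.1 hn _ (hI n) (hup n))
    _ = ν Set.univ * (q * ν Set.univ) := by
        rw [lintegral_const, ← Set.univ_prod_univ, Measure.prod_prod, ← hmass]
        ring

end GapContraction

section GreedyMatching

variable {E : Type*} [MeasurableSpace E] [Preorder E]

lemma IsMaximalMatching.isFiniteMeasure_residual {α α' ν ν' : Measure E} {s : Measure (E × E)}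
    [IsFiniteMeasure α] [IsFiniteMeasure α'] (h : IsMaximalMatching α α' s ν ν') :
    IsFiniteMeasure ν ∧ IsFiniteMeasure ν' :=
  ⟨isFiniteMeasure_of_le α h.residual_le_left, isFiniteMeasure_of_le α' h.residual_le_right⟩

lemma IsMaximalMatching.residual_univ_eq {α α' ν ν' : Measure E} {s : Measure (E × E)}
    [IsFiniteMeasure α] (h : IsMaximalMatching α α' s ν ν') (hmass : α Set.univ = α' Set.univ) :
    ν Set.univ = ν' Set.univ := by
  have hs : s Set.univ ≠ ⊤ := (h.matched_univ_le.trans_lt (measure_lt_top _ _)).ne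
  rw [← h.fst_add, ← h.snd_add, Measure.add_apply, Measure.add_apply, Measure.fst_univ,
    Measure.snd_univ] at hmass
  exact (ENNReal.add_right_inj hs).1 hmass

/-- The greedy scheme for two chains with kernel `P` started at `x` and `y`: at every time `m` as
much as possible of the mass still unmatched is put into a matched part `s m` on the order
relation; the unmatched parts `ν m`, `ν' m` of the two laws then move on according to `P`. -/
structure IsGreedyMatching (P : Kernel E E) (x y : E) (s : ℕ → Measure (E × E))
    (ν ν' : ℕ → Measure E) : Prop where
  zero : IsMaximalMatching (.dirac x) (.dirac y) (s 0) (ν 0) (ν' 0)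
  succ (m : ℕ) : IsMaximalMatching (P ∘ₘ ν m) (P ∘ₘ ν' m) (s (m + 1)) (ν (m + 1)) (ν' (m + 1))

lemma IsGreedyMatching.supported {P : Kernel E E} {x y : E} {s : ℕ → Measure (E × E)}
    {ν ν' : ℕ → Measure E} (h : IsGreedyMatching P x y s ν ν') (m : ℕ) : s m (leRel E)ᶜ = 0 := by
  cases m with
  | zero => exact h.zero.supported
  | succ m => exact (h.succ m).supported

theorem exists_isGreedyMatching [TopologicalSpace E] [PolishSpace E] [BorelSpace E]
    [OrderClosedTopology E] (P : Kernel E E) [IsMarkovKernel P] (x y : E) :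
    ∃ s ν ν', IsGreedyMatching P x y s ν ν' := by
  let Balanced := {p : Measure E × Measure E //
    IsFiniteMeasure p.1 ∧ IsFiniteMeasure p.2 ∧ p.1 Set.univ = p.2 Set.univ}
  have hmatch (p : Balanced) : ∃ (s : Measure (E × E)) (r : Balanced),
      IsMaximalMatching p.1.1 p.1.2 s r.1.1 r.1.2 := by
    obtain ⟨⟨α, α'⟩, hα, hα', hmass⟩ := p
    obtain ⟨s, ν, ν', h⟩ := exists_isMaximalMatching α α' hmass
    exact ⟨s, ⟨⟨ν, ν'⟩, h.isFiniteMeasure_residual.1, h.isFiniteMeasure_residual.2,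
      h.residual_univ_eq hmass⟩, h⟩
  choose s residual hs using hmatch
  let start : Balanced := ⟨(.dirac x, .dirac y), inferInstance, inferInstance, by simp⟩
  let evolve : Balanced → Balanced := fun p =>
    have := p.2.1
    have := p.2.2.1
    ⟨(P ∘ₘ p.1.1, P ∘ₘ p.1.2), inferInstance, inferInstance, by
      simpa only [Measure.comp_apply_univ] using p.2.2.2⟩
  let input : ℕ → Balanced := fun m => (evolve ∘ residual)^[m] start
  have hinput (m : ℕ) : input (m + 1) = evolve (residual (input m)) :=
    Function.iterate_succ_apply' _ _ _
  refine ⟨fun m => s (input m), fun m => (residual (input m)).1.1,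
    fun m => (residual (input m)).1.2, hs start, fun m => ?_⟩
  have hm := hs (input (m + 1))
  rw [hinput] at hm ⊢
  exact hm

namespace IsGreedyMatching

variable {P : Kernel E E} [IsMarkovKernel P] {x y : E} {s : ℕ → Measure (E × E)}
  {ν ν' : ℕ → Measure E}

lemma isFiniteMeasure_residual (h : IsGreedyMatching P x y s ν ν') (m : ℕ) :
    IsFiniteMeasure (ν m) ∧ IsFiniteMeasure (ν' m) := by
  induction m with
  | zero => exact h.zero.isFiniteMeasure_residual
  | succ m ih =>
    have := ih.1
    have := ih.2
    exact (h.succ m).isFiniteMeasure_residual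

lemma residual_univ_eq (h : IsGreedyMatching P x y s ν ν') (m : ℕ) :
    ν m Set.univ = ν' m Set.univ := by
  induction m with
  | zero => exact h.zero.residual_univ_eq (by simp)
  | succ m ih =>
    have := (h.isFiniteMeasure_residual m).1
    exact (h.succ m).residual_univ_eq (by simpa only [Measure.comp_apply_univ] using ih)

lemma antitone_residual_univ (h : IsGreedyMatching P x y s ν ν') :
    Antitone fun m => ν m Set.univ :=
  antitone_nat_of_succ_le fun m =>
    ((h.succ m).residual_le_left Set.univ).trans_eq Measure.comp_apply_univ

lemma residual_univ_add_le (h : IsGreedyMatching P x y s ν ν') (m n : ℕ) :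
    ν (m + n + 1) Set.univ + ν (m + n) Set.univ ≤
      upperGap (kpow P (n + 1) ∘ₘ ν m) (kpow P (n + 1) ∘ₘ ν' m) + ν m Set.univ := by
  have := (h.isFiniteMeasure_residual (m + n)).2
  have hν := le_kpow_comp P (fun k => (h.succ k).residual_le_left) m n
  have hν' := le_kpow_comp P (fun k => (h.succ k).residual_le_right) m n
  calc ν (m + n + 1) Set.univ + ν (m + n) Set.univ
      ≤ upperGap (P ∘ₘ ν (m + n)) (P ∘ₘ ν' (m + n)) + (P ∘ₘ ν' (m + n)) Set.univ := by
        rw [Measure.comp_apply_univ, h.residual_univ_eq (m + n)]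
        gcongr
        exact (h.succ (m + n)).residual_le
    _ ≤ upperGap (P ∘ₘ kpow P n ∘ₘ ν m) (P ∘ₘ kpow P n ∘ₘ ν' m)
          + (P ∘ₘ kpow P n ∘ₘ ν' m) Set.univ :=
        upperGap_add_univ_le (measure_comp_mono P hν) (measure_comp_mono P hν')
    _ = _ := by
        simp only [kpow_succ, ← Measure.comp_assoc, Measure.comp_apply_univ, h.residual_univ_eq m]

theorem tendsto_residual_univ (h : IsGreedyMatching P x y s ν ν') {q : ENNReal} (hq : q < 1)
    (hgap : ∀ x y, ∀ᶠ n in atTop, upperGap (kpow P n x) (kpow P n y) ≤ q) :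
    Tendsto (fun m => ν m Set.univ) atTop (𝓝 0) := by
  have hfin (m : ℕ) := h.isFiniteMeasure_residual m
  have hlim := tendsto_atTop_iInf h.antitone_residual_univ
  set c := ⨅ m, ν m Set.univ
  have hc (m : ℕ) : c ≤ ν m Set.univ := iInf_le _ m
  have hbound (m : ℕ) : c + c ≤ q * ν m Set.univ + ν m Set.univ := by
    have := (hfin m).1
    have := (hfin m).2
    refine tsub_le_iff_right.1 <| le_trans ?_ <| limsup_upperGap_comp_le
      (fun x y => (tendsto_add_atTop_nat 1).eventually (hgap x y)) (h.residual_univ_eq m)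
    refine le_limsup_of_frequently_le' (Frequently.of_forall fun n => tsub_le_iff_right.2 ?_)
    exact (add_le_add (hc _) (hc _)).trans (h.residual_univ_add_le m n)
  have hctop : c ≠ ⊤ := have := (hfin 0).1; ne_top_of_le_ne_top (measure_ne_top _ _) (hc 0)
  have hlimit : c + c ≤ q * c + c := ge_of_tendsto'
    ((ENNReal.Tendsto.const_mul hlim (Or.inr hq.ne_top)).add hlim) hbound
  have hle : 1 * c ≤ q * c := by
    rw [one_mul]
    exact ENNReal.le_of_add_le_add_right hctop hlimit
  have hc0 : c = 0 := by
    by_contra hc0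
    exact hle.not_gt ((ENNReal.mul_lt_mul_iff_left hc0 hctop).2 hq)
  exact hc0 ▸ hlim

end IsGreedyMatching

end GreedyMatching

section Backflow

variable {S T : Type*} [MeasurableSpace S] [MeasurableSpace T]

/-- The mass which `σ (m + j + 1)` puts at time `m` when it is carried backwards in time by the
kernels `κ (m + j), …, κ m`. -/
noncomputable def backflow (κ : ℕ → Kernel S S) (σ : ℕ → Measure S) : ℕ → ℕ → Measure S
  | 0, m => κ m ∘ₘ σ (m + 1)
  | j + 1, m => κ m ∘ₘ backflow κ σ j (m + 1)

/-- The total mass put at time `m` when every `σ n` with `n > m` is carried backwards in time by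
the kernels `κ`. -/
noncomputable def occupation (κ : ℕ → Kernel S S) (σ : ℕ → Measure S) (m : ℕ) : Measure S :=
  .sum fun j => backflow κ σ j m

lemma occupation_eq_comp (κ : ℕ → Kernel S S) (σ : ℕ → Measure S) (m : ℕ) :
    occupation κ σ m = κ m ∘ₘ (σ (m + 1) + occupation κ σ (m + 1)) := by
  rw [Measure.comp_add, occupation, occupation, Measure.bind_sum _ _ (κ m).aemeasurable]
  ext A hA
  rw [Measure.add_apply, Measure.sum_apply _ hA, Measure.sum_apply _ hA,
    tsum_eq_zero_add' ENNReal.summable]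
  rfl

lemma map_comp_eq_comp_map {κ : Kernel S S} {κ' : Kernel T T} {c : S → T} (hc : Measurable c)
    {θ : Measure S} (h : ∀ᵐ w ∂θ, (κ w).map c = κ' (c w)) :
    (κ ∘ₘ θ).map c = κ' ∘ₘ θ.map c := by
  ext A hA
  rw [Measure.map_apply hc hA, Measure.bind_apply (hc hA) κ.aemeasurable,
    Measure.bind_apply hA κ'.aemeasurable, lintegral_map (κ'.measurable_coe hA) hc]
  refine lintegral_congr_ae ?_
  filter_upwards [h] with w hw
  rw [← hw, Measure.map_apply hc hA]

lemma map_occupation {κ : ℕ → Kernel S S} {κ' : ℕ → Kernel T T} {c : S → T} (hc : Measurable c)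
    (h : ∀ m w, (κ m w).map c = κ' m (c w)) (σ : ℕ → Measure S) (m : ℕ) :
    (occupation κ σ m).map c = occupation κ' (fun n => (σ n).map c) m := by
  have hback (j m : ℕ) : (backflow κ σ j m).map c = backflow κ' (fun n => (σ n).map c) j m := by
    induction j generalizing m with
    | zero => exact map_comp_eq_comp_map hc (.of_forall (h m))
    | succ j ih =>
      rw [backflow, map_comp_eq_comp_map hc (.of_forall (h m)), ih, backflow]
  simp only [occupation, Measure.map_sum hc.aemeasurable, hback]

lemma exists_sum_backflow_add_eq {κ : ℕ → Kernel S S} [∀ m, IsMarkovKernel (κ m)]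
    {σ ν : ℕ → Measure S} (hν : ∀ m, ν m = κ m ∘ₘ (σ (m + 1) + ν (m + 1))) (n m : ℕ) :
    ∃ r : Measure S, (∀ A, MeasurableSet A →
      ∑ j ∈ Finset.range n, backflow κ σ j m A + r A = ν m A) ∧
      r Set.univ = ν (m + n) Set.univ := by
  induction n generalizing m with
  | zero => exact ⟨ν m, by simp, rfl⟩
  | succ n ih =>
    obtain ⟨r, hr, hmass⟩ := ih (m + 1)
    have hsum : ν (m + 1) = .sum (fun j : Finset.range n => backflow κ σ j (m + 1)) + r := by
      ext A hA
      rw [Measure.add_apply, Measure.sum_apply _ hA, ← hr A hA, tsum_fintype,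
        Finset.sum_coe_sort _ fun j => backflow κ σ j (m + 1) A]
    refine ⟨κ m ∘ₘ r, fun A hA => ?_, ?_⟩
    · rw [hν m, hsum, Measure.comp_add, Measure.comp_add,
        Measure.bind_sum _ _ (κ m).aemeasurable, Measure.add_apply, Measure.add_apply,
        Measure.sum_apply _ hA, tsum_fintype, Finset.sum_range_succ',
        Finset.sum_coe_sort _ fun j => (κ m ∘ₘ backflow κ σ j (m + 1)) A]
      simp only [backflow]
      ring
    · rw [Measure.comp_apply_univ, hmass, Nat.add_right_comm, Nat.add_assoc]

theorem occupation_eq_of_tendsto {κ : ℕ → Kernel S S} [∀ m, IsMarkovKernel (κ m)]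
    {σ ν : ℕ → Measure S} (hν : ∀ m, ν m = κ m ∘ₘ (σ (m + 1) + ν (m + 1)))
    (hlim : Tendsto (fun m => ν m Set.univ) atTop (𝓝 0)) (m : ℕ) : occupation κ σ m = ν m := by
  choose r hr hmass using fun n => exists_sum_backflow_add_eq hν n m
  have hr0 : Tendsto (fun n => r n Set.univ) atTop (𝓝 0) := by
    simp only [hmass, Nat.add_comm m]
    exact (tendsto_add_atTop_iff_nat m).2 hlim
  ext A hA
  have hrA : Tendsto (fun n => r n A) atTop (𝓝 0) :=
    tendsto_of_tendsto_of_tendsto_of_le_of_le tendsto_const_nhds hr0 (fun _ => zero_le)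
      fun n => measure_mono (Set.subset_univ A)
  have hsum := (ENNReal.tendsto_nat_tsum fun j => backflow κ σ j m A).add hrA
  simp only [hr _ A hA, add_zero] at hsum
  rw [occupation, Measure.sum_apply _ hA]
  exact tendsto_nhds_unique hsum tendsto_const_nhds

end Backflow

section TimeReversal

variable {S T : Type*} [MeasurableSpace S] [MeasurableSpace T]

lemma comp_withDensity_of_compProd_eq {ν : Measure S} {μ : Measure T} [SFinite ν] [SFinite μ]
    {η : Kernel S T} {κ : Kernel T S} [IsSFiniteKernel η] [IsSFiniteKernel κ]
    (h : ν ⊗ₘ η = (μ ⊗ₘ κ).map Prod.swap) {f : S → ENNReal} (hf : Measurable f) :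
    η ∘ₘ ν.withDensity f = μ.withDensity fun w => ∫⁻ z, f z ∂κ w := by
  ext A hA
  have hA' : Measurable (A.indicator (1 : T → ENNReal)) := measurable_one.indicator hA
  calc (η ∘ₘ ν.withDensity f) A
      = ∫⁻ z, f z * ∫⁻ w, A.indicator 1 w ∂η z ∂ν := by
        simp only [lintegral_indicator_one hA]
        rw [Measure.bind_apply hA η.aemeasurable,
          lintegral_withDensity_eq_lintegral_mul _ hf (η.measurable_coe hA)]
        rfl
    _ = ∫⁻ p, f p.1 * A.indicator 1 p.2 ∂(ν ⊗ₘ η) := by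
        rw [Measure.lintegral_compProd (by fun_prop)]
        simp only [lintegral_const_mul _ hA']
    _ = ∫⁻ w, A.indicator 1 w * ∫⁻ z, f z ∂κ w ∂μ := by
        rw [h, lintegral_map (by fun_prop) measurable_swap,
          Measure.lintegral_compProd (by simp only [Prod.fst_swap, Prod.snd_swap]; fun_prop)]
        simp only [Prod.fst_swap, Prod.snd_swap, lintegral_mul_const _ hf, mul_comm]
    _ = (μ.withDensity fun w => ∫⁻ z, f z ∂κ w) A := by
        rw [withDensity_apply _ hA, ← lintegral_indicator hA]
        congr with w
        by_cases hw : w ∈ A <;> simp [hw]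

lemma map_withDensity_comp {c : S → T} (hc : Measurable c) (θ : Measure S) {f : T → ENNReal}
    (hf : Measurable f) : (θ.withDensity (f ∘ c)).map c = (θ.map c).withDensity f := by
  ext A hA
  rw [Measure.map_apply hc hA, withDensity_apply _ (hc hA), withDensity_apply _ hA,
    setLIntegral_map hA hf hc]
  rfl

lemma map_fst_parallelComp_apply {S' T' : Type*} [MeasurableSpace S'] [MeasurableSpace T']
    (κ : Kernel S T) (κ' : Kernel S' T') [IsSFiniteKernel κ] [IsMarkovKernel κ'] (w : S × S') :
    ((κ ∥ₖ κ') w).map Prod.fst = κ w.1 := by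
  rw [Kernel.parallelComp_apply]
  exact Measure.fst_prod

lemma map_snd_parallelComp_apply {S' T' : Type*} [MeasurableSpace S'] [MeasurableSpace T']
    (κ : Kernel S T) (κ' : Kernel S' T') [IsMarkovKernel κ] [IsSFiniteKernel κ'] (w : S × S') :
    ((κ ∥ₖ κ') w).map Prod.snd = κ' w.2 := by
  rw [Kernel.parallelComp_apply]
  exact Measure.snd_prod

variable [StandardBorelSpace S] [Nonempty S]

lemma comp_withDensity_eq_withDensity_lintegral_posterior (P : Kernel S T) [IsMarkovKernel P]
    (ν : Measure S) [IsFiniteMeasure ν] {f : S → ENNReal} (hf : Measurable f) :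
    P ∘ₘ ν.withDensity f = (P ∘ₘ ν).withDensity fun w => ∫⁻ z, f z ∂(P†ν) w := by
  refine comp_withDensity_of_compProd_eq ?_ hf
  rw [compProd_posterior_eq_map_swap, Measure.map_map measurable_swap measurable_swap]
  simp

lemma posterior_comp_withDensity_comp (κ : Kernel S S) [IsMarkovKernel κ] {B : Kernel T T}
    {c : S → T} (hc : Measurable c) (hκ : ∀ w, (κ w).map c = B (c w)) (σ : Measure S)
    [IsFiniteMeasure σ] {f : T → ENNReal} (hf : Measurable f) :
    (κ†σ) ∘ₘ (κ ∘ₘ σ).withDensity (f ∘ c) = σ.withDensity ((fun y => ∫⁻ z, f z ∂B y) ∘ c) := by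
  rw [comp_withDensity_of_compProd_eq compProd_posterior_eq_map_swap (hf.comp hc)]
  congr with w
  rw [Function.comp_apply, ← hκ, lintegral_map hf hc]
  rfl

end TimeReversal

section Lumping

variable {S T : Type*} [MeasurableSpace S] [MeasurableSpace T]

/-- The kernel `R` moves reweightings of `ρ` by functions of the coordinate `c` to such
reweightings of `θ`, and on all of them it acts on the coordinate `c` as `P` does. This makes `c` a
Markov chain with kernel `P` although `R z` may depend on more than `c z`. -/
def IsLumpedStep (c : S → T) (P : Kernel T T) (R : Kernel S S) (ρ θ : Measure S) : Prop :=
  ∀ f : T → ENNReal, Measurable f →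
    (R ∘ₘ ρ.withDensity (f ∘ c)).map c = P ∘ₘ (ρ.withDensity (f ∘ c)).map c ∧
      ∃ g : T → ENNReal, Measurable g ∧ R ∘ₘ ρ.withDensity (f ∘ c) = θ.withDensity (g ∘ c)

lemma IsLumpedStep.congr {c : S → T} {P : Kernel T T} {R R' : Kernel S S} {ρ θ : Measure S}
    (h : IsLumpedStep c P R ρ θ) (hR : ∀ᵐ z ∂ρ, R' z = R z) : IsLumpedStep c P R' ρ θ := by
  intro f hf
  rw [Measure.comp_congr ((withDensity_absolutelyContinuous ρ (f ∘ c)).ae_le hR)]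
  exact h f hf

theorem isLumpedStep_posterior [StandardBorelSpace S] [Nonempty S] [StandardBorelSpace T]
    [Nonempty T] {c : S → T} (hc : Measurable c) (P : Kernel T T) [IsMarkovKernel P]
    (ν : Measure T) [IsFiniteMeasure ν] (κ : Kernel S S) [IsMarkovKernel κ]
    (hκ : ∀ w, (κ w).map c = (P†ν) (c w)) (σ : Measure S) [IsFiniteMeasure σ]
    (hσ : σ.map c = P ∘ₘ ν) : IsLumpedStep c P (κ†σ) (κ ∘ₘ σ) σ := by
  intro f hf
  have hmove := posterior_comp_withDensity_comp κ hc hκ σ hf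
  have hg : Measurable fun y => ∫⁻ z, f z ∂(P†ν) y := hf.lintegral_kernel
  refine ⟨?_, _, hg, hmove⟩
  calc ((κ†σ) ∘ₘ (κ ∘ₘ σ).withDensity (f ∘ c)).map c
      = P ∘ₘ ν.withDensity f := by
        rw [hmove, map_withDensity_comp hc _ hg, hσ,
          comp_withDensity_eq_withDensity_lintegral_posterior P ν hf]
    _ = P ∘ₘ ((κ ∘ₘ σ).withDensity (f ∘ c)).map c := by
        rw [map_withDensity_comp hc _ hf, map_comp_eq_comp_map hc (.of_forall hκ), hσ,
          posterior_comp_self]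

variable {Ω : Type*} [MeasurableSpace Ω] {μ : Measure Ω} [IsFiniteMeasure μ] {Q : ℕ → Kernel S S}
  [∀ n, IsMarkovKernel (Q n)] {Z : ℕ → Ω → S} {P : Kernel T T} [IsMarkovKernel P] {c : S → T}

lemma MCStep.map_succ (hstep : MCStep μ Q Z) (hZ : ∀ n, Measurable (Z n)) (n : ℕ) :
    μ.map (Z (n + 1)) = Q n ∘ₘ μ.map (Z n) := by
  have h := (mcStep_iff_staysIn hZ).1 hstep n (fun _ => Set.univ) fun _ => .univ
  simpa [staysIn] using h

theorem MCStep.comp_of_forall_mem (hstep : MCStep μ Q Z) (hZ : ∀ n, Measurable (Z n))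
    (hc : Measurable c) (𝓛 : ℕ → Set (Measure S))
    (hzero : ∀ A, MeasurableSet A → (μ.map (Z 0)).restrict (c ⁻¹' A) ∈ 𝓛 0)
    (hsucc : ∀ n, ∀ Λ ∈ 𝓛 n, ∀ A, MeasurableSet A → (Q n ∘ₘ Λ).restrict (c ⁻¹' A) ∈ 𝓛 (n + 1))
    (hlump : ∀ n, ∀ Λ ∈ 𝓛 n, (Q n ∘ₘ Λ).map c = P ∘ₘ Λ.map c) :
    MCStep μ (fun _ => P) fun n ω => c (Z n ω) := by
  have hstep' := (mcStep_iff_staysIn hZ).1 hstep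
  have hmem (s : ℕ → Set T) (hs : ∀ i, MeasurableSet (s i)) (n : ℕ) :
      (μ.restrict (staysIn Z (fun i => c ⁻¹' s i) n)).map (Z n) ∈ 𝓛 n := by
    induction n with
    | zero =>
      rw [staysIn_zero, ← Measure.restrict_map (hZ 0) (hc (hs 0))]
      exact hzero _ (hs 0)
    | succ n ih =>
      rw [map_staysIn_succ hZ fun i => hc (hs i), hstep' n _ fun i => hc (hs i)]
      exact hsucc n _ ih _ (hs _)
  refine (mcStep_iff_staysIn fun n => hc.comp (hZ n)).2 fun n s hs => ?_
  have hstay : staysIn (fun n => c ∘ Z n) s n = staysIn Z (fun i => c ⁻¹' s i) n := rfl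
  rw [hstay, ← Measure.map_map hc (hZ _), ← Measure.map_map hc (hZ _),
    hstep' n _ fun i => hc (hs i)]
  exact hlump n _ (hmem s hs n)

end Lumping

section PartialLumping

variable {S T : Type*} [MeasurableSpace S] [MeasurableSpace T] {D : Set S}

lemma comp_restrict_compl (hD : MeasurableSet D) {κ : Kernel S S} {Λ : Measure S}
    (h : ∀ᵐ z ∂Λ.restrict D, κ z Dᶜ = 0) :
    (κ ∘ₘ Λ).restrict Dᶜ = (κ ∘ₘ Λ.restrict Dᶜ).restrict Dᶜ := by
  have hzero : (κ ∘ₘ Λ.restrict D).restrict Dᶜ = 0 := by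
    rw [Measure.restrict_eq_zero, Measure.bind_apply hD.compl κ.aemeasurable,
      lintegral_eq_zero_iff (κ.measurable_coe hD.compl)]
    exact h
  conv_lhs => rw [← Measure.restrict_add_restrict_compl (μ := Λ) hD, Measure.comp_add,
    Measure.restrict_add, hzero, zero_add]

lemma restrict_preimage_withDensity_comp {c : S → T} (hc : Measurable c) (θ : Measure S)
    (f : T → ENNReal) {A : Set T} (hA : MeasurableSet A) :
    (θ.withDensity (f ∘ c)).restrict (c ⁻¹' A) = θ.withDensity (A.indicator f ∘ c) := by
  rw [restrict_withDensity (hc hA), ← withDensity_indicator (hc hA)]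
  rfl

variable {Q : ℕ → Kernel S S} {L ρ θ : ℕ → Measure S}

lemma restrict_compl_eq_of_comp_eq (hD : MeasurableSet D) (hL : ∀ m, L (m + 1) = Q m ∘ₘ L m)
    (hQ : ∀ m, ∀ᵐ z ∂(L m).restrict D, Q m z Dᶜ = 0) (hzero : (L 0).restrict Dᶜ = ρ 0)
    (hρ : ∀ m, Q m ∘ₘ ρ m = θ m) (hθ : ∀ m, (θ m).restrict Dᶜ = ρ (m + 1)) (m : ℕ) :
    (L m).restrict Dᶜ = ρ m := by
  induction m with
  | zero => exact hzero
  | succ m ih => rw [hL, comp_restrict_compl hD (hQ m), ih, hρ, hθ]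

/-- Once `Z` has entered the absorbing set `D`, its coordinate `c` moves as `P` from every state;
outside `D`, where `Z m` has law `ρ m`, this is only asked on average, as a lumped step. -/
theorem MCStep.comp_of_isLumpedStep {Ω : Type*} [MeasurableSpace Ω] {μ : Measure Ω}
    [IsFiniteMeasure μ] [∀ n, IsMarkovKernel (Q n)] {Z : ℕ → Ω → S} {P : Kernel T T}
    [IsMarkovKernel P] {c : S → T} (hstep : MCStep μ Q Z) (hZ : ∀ n, Measurable (Z n))
    (hc : Measurable c) (hD : MeasurableSet D)
    (hQD : ∀ m, ∀ᵐ z ∂(μ.map (Z m)).restrict D, Q m z Dᶜ = 0)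
    (hQP : ∀ m, ∀ᵐ z ∂(μ.map (Z m)).restrict D, (Q m z).map c = P (c z))
    (hzero : (μ.map (Z 0)).restrict Dᶜ = ρ 0) (hθ : ∀ m, (θ m).restrict Dᶜ = ρ (m + 1))
    (hlump : ∀ m, IsLumpedStep c P (Q m) (ρ m) (θ m)) :
    MCStep μ (fun _ => P) fun n ω => c (Z n ω) := by
  let 𝓛 (m : ℕ) : Set (Measure S) := {Λ | Λ ≪ μ.map (Z m) ∧
    ∃ f : T → ENNReal, Measurable f ∧ Λ.restrict Dᶜ = (ρ m).withDensity (f ∘ c)}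
  have hrestrict {m : ℕ} {Λ : Measure S} (hΛ : Λ ∈ 𝓛 m) {A : Set T} (hA : MeasurableSet A) :
      Λ.restrict (c ⁻¹' A) ∈ 𝓛 m := by
    obtain ⟨hac, f, hf, hΛf⟩ := hΛ
    refine ⟨Measure.restrict_le_self.absolutelyContinuous.trans hac, _, hf.indicator hA, ?_⟩
    rw [Measure.restrict_comm hD.compl, hΛf, restrict_preimage_withDensity_comp hc _ f hA]
  refine hstep.comp_of_forall_mem hZ hc 𝓛 (fun A hA => hrestrict ⟨.rfl, 1, measurable_one, ?_⟩ hA)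
    (fun m Λ hΛ A hA => hrestrict ?_ hA) ?_
  · rw [hzero]
    exact withDensity_one.symm
  · obtain ⟨hac, f, hf, hΛf⟩ := hΛ
    obtain ⟨-, g, hg, hstepg⟩ := hlump m f hf
    refine ⟨?_, g, hg, ?_⟩
    · rw [hstep.map_succ hZ]
      exact hac.comp_right (Q m)
    · rw [comp_restrict_compl hD ((hac.restrict D).ae_le (hQD m)), hΛf, hstepg,
        restrict_withDensity hD.compl, hθ]
  · rintro m Λ ⟨hac, f, hf, hΛf⟩
    rw [← Measure.restrict_add_restrict_compl (μ := Λ) hD, Measure.comp_add,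
      Measure.map_add _ _ hc, Measure.map_add _ _ hc, Measure.comp_add,
      map_comp_eq_comp_map hc ((hac.restrict D).ae_le (hQP m)), hΛf, (hlump m f hf).1]

end PartialLumping

section ResidualCoupling

variable {E : Type*} [TopologicalSpace E] [PolishSpace E] [MeasurableSpace E] [BorelSpace E]
  [Preorder E]

/-- A coupling `ρ m` of the unmatched parts `ν m`, `ν' m` of a greedy matching off the order
relation, with a step `R m` that carries it to the next matched and unmatched parts and under
which each coordinate moves according to `P`. -/
structure IsResidualCoupling (P : Kernel E E) (s : ℕ → Measure (E × E)) (ν ν' : ℕ → Measure E)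
    (ρ : ℕ → Measure (E × E)) (R : ℕ → Kernel (E × E) (E × E)) : Prop where
  isMarkovKernel (m : ℕ) : IsMarkovKernel (R m)
  fst_eq (m : ℕ) : (ρ m).fst = ν m
  snd_eq (m : ℕ) : (ρ m).snd = ν' m
  leRel_eq_zero (m : ℕ) : ρ m (leRel E) = 0
  comp_eq (m : ℕ) : R m ∘ₘ ρ m = s (m + 1) + ρ (m + 1)
  lumped_fst (m : ℕ) : IsLumpedStep Prod.fst P (R m) (ρ m) (s (m + 1) + ρ (m + 1))
  lumped_snd (m : ℕ) : IsLumpedStep Prod.snd P (R m) (ρ m) (s (m + 1) + ρ (m + 1))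

namespace IsGreedyMatching

variable {P : Kernel E E} [IsMarkovKernel P] {x y : E} {s : ℕ → Measure (E × E)}
  {ν ν' : ℕ → Measure E}

lemma measure_leRel_eq_zero_of_marginals [OrderClosedTopology E]
    (h : IsGreedyMatching P x y s ν ν') {m : ℕ} {ρ : Measure (E × E)} (hfst : ρ.fst = ν m)
    (hsnd : ρ.snd = ν' m) : ρ (leRel E) = 0 := by
  have hM : MeasurableSet (leRel E) := measurableSet_leRel
  have hsupp : ρ.restrict (leRel E) (leRel E)ᶜ = 0 := by
    rw [Measure.restrict_apply hM.compl, Set.compl_inter_self, measure_empty]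
  have hfst' : (ρ.restrict (leRel E)).fst ≤ ν m :=
    hfst ▸ Measure.map_mono Measure.restrict_le_self measurable_fst
  have hsnd' : (ρ.restrict (leRel E)).snd ≤ ν' m :=
    hsnd ▸ Measure.map_mono Measure.restrict_le_self measurable_snd
  rw [← Measure.restrict_eq_zero]
  cases m with
  | zero => exact h.zero.eq_zero_of_le hsupp hfst' hsnd'
  | succ m =>
    have := (h.isFiniteMeasure_residual m).1
    exact (h.succ m).eq_zero_of_le hsupp hfst' hsnd'

/-- The unmatched parts are coupled by carrying each matched part `s n` backwards in time with the
two chains reversed independently of each other; since all mass gets matched eventually, this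
recovers `ν m` and `ν' m` entirely. The step `R m` is the time reversal of this procedure. -/
theorem exists_isResidualCoupling [OrderClosedTopology E] (h : IsGreedyMatching P x y s ν ν')
    (hlim : Tendsto (fun m => ν m Set.univ) atTop (𝓝 0)) :
    ∃ ρ R, IsResidualCoupling P s ν ν' ρ R := by
  have : Nonempty E := ⟨x⟩
  have hν (m : ℕ) : IsFiniteMeasure (ν m) := (h.isFiniteMeasure_residual m).1
  have hν' (m : ℕ) : IsFiniteMeasure (ν' m) := (h.isFiniteMeasure_residual m).2
  have hlim' : Tendsto (fun m => ν' m Set.univ) atTop (𝓝 0) := by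
    simpa only [h.residual_univ_eq] using hlim
  let κ (m : ℕ) : Kernel (E × E) (E × E) := (P†(ν m)) ∥ₖ (P†(ν' m))
  let ρ := occupation κ s
  have hκfst (m : ℕ) (w : E × E) : (κ m w).map Prod.fst = (P†(ν m)) w.1 :=
    map_fst_parallelComp_apply _ _ w
  have hκsnd (m : ℕ) (w : E × E) : (κ m w).map Prod.snd = (P†(ν' m)) w.2 :=
    map_snd_parallelComp_apply _ _ w
  have hfst (m : ℕ) : (ρ m).fst = ν m :=
    (map_occupation measurable_fst hκfst s m).trans <| occupation_eq_of_tendsto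
      (fun m => by rw [← Measure.fst, (h.succ m).fst_add, posterior_comp_self]) hlim m
  have hsnd (m : ℕ) : (ρ m).snd = ν' m :=
    (map_occupation measurable_snd hκsnd s m).trans <| occupation_eq_of_tendsto
      (fun m => by rw [← Measure.snd, (h.succ m).snd_add, posterior_comp_self]) hlim' m
  let σ (m : ℕ) := s (m + 1) + ρ (m + 1)
  have hσfst (m : ℕ) : (σ m).map Prod.fst = P ∘ₘ ν m := by
    rw [← (h.succ m).fst_add, ← hfst]
    exact Measure.fst_add ..
  have hσsnd (m : ℕ) : (σ m).map Prod.snd = P ∘ₘ ν' m := by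
    rw [← (h.succ m).snd_add, ← hsnd]
    exact Measure.snd_add ..
  have hσ (m : ℕ) : IsFiniteMeasure (σ m) := ⟨by
    rw [← Measure.fst_univ, Measure.fst, hσfst]
    exact measure_lt_top _ _⟩
  have hρ (m : ℕ) : ρ m = κ m ∘ₘ σ m := occupation_eq_comp κ s m
  refine ⟨ρ, fun m => (κ m)†(σ m), fun _ => inferInstance, hfst, hsnd,
    fun m => h.measure_leRel_eq_zero_of_marginals (hfst m) (hsnd m), fun m => ?_, fun m => ?_,
    fun m => ?_⟩ <;> rw [hρ m]
  · exact posterior_comp_self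
  · exact isLumpedStep_posterior measurable_fst P (ν m) (κ m) (hκfst m) (σ m) (hσfst m)
  · exact isLumpedStep_posterior measurable_snd P (ν' m) (κ m) (hκsnd m) (σ m) (hσsnd m)

end IsGreedyMatching

end ResidualCoupling

section ChainExistence

lemma mcStep_map_iff {Ω Ω' S : Type*} [MeasurableSpace Ω] [MeasurableSpace Ω'] [MeasurableSpace S]
    {μ : Measure Ω} [IsFiniteMeasure μ] {Q : ℕ → Kernel S S} [∀ n, IsMarkovKernel (Q n)]
    {e : Ω → Ω'} (he : Measurable e) {Z : ℕ → Ω' → S} (hZ : ∀ n, Measurable (Z n)) :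
    MCStep (μ.map e) Q Z ↔ MCStep μ Q fun n => Z n ∘ e := by
  rw [mcStep_iff_staysIn hZ, mcStep_iff_staysIn fun n => (hZ n).comp he]
  refine forall_congr' fun n => forall₂_congr fun s hs => ?_
  rw [Measure.restrict_map he (measurableSet_staysIn hZ hs n), Measure.map_map (hZ _) he,
    Measure.map_map (hZ _) he]
  rfl

variable {S : Type*} [MeasurableSpace S] (μ₀ : Measure S)

/-- The law of the trajectory of a Markov chain with initial law `μ₀` and transition kernels
`Q n`, obtained from the Ionescu-Tulcea theorem for kernels depending on the last state only. -/
noncomputable def chainMeasure (Q : ℕ → Kernel S S) [∀ n, IsMarkovKernel (Q n)] :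
    Measure (ℕ → S) :=
  Kernel.trajMeasure (X := fun _ => S) μ₀ fun n =>
    (Q n).comap (fun v => v ⟨n, Finset.mem_Iic.2 le_rfl⟩) (measurable_pi_apply _)

variable (Q : ℕ → Kernel S S) [∀ n, IsMarkovKernel (Q n)]

instance [IsProbabilityMeasure μ₀] : IsProbabilityMeasure (chainMeasure μ₀ Q) := by
  unfold chainMeasure
  infer_instance

lemma map_chainMeasure_zero : (chainMeasure μ₀ Q).map (fun w => w 0) = μ₀ := by
  have hzero : (fun w : ℕ → S => w 0) =
      (fun v => v ⟨0, Finset.mem_Iic.2 le_rfl⟩) ∘ Preorder.frestrictLe (π := fun _ => S) 0 := rfl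
  rw [hzero, ← Measure.map_map (by fun_prop) (by fun_prop), chainMeasure, Kernel.trajMeasure,
    Measure.map_comp _ _ (by fun_prop), Kernel.traj_map_frestrictLe, Kernel.partialTraj_self,
    Measure.id_comp, Measure.map_map (by fun_prop) (by fun_prop)]
  exact Measure.map_id

variable [IsProbabilityMeasure μ₀]

lemma mcStep_chainMeasure : MCStep (chainMeasure μ₀ Q) Q fun n w => w n := by
  refine (mcStep_iff_staysIn fun n => measurable_pi_apply n).2 fun n s hs => ?_
  ext A hA
  let rect : Set (Finset.Iic n → S) := Set.univ.pi fun i => s i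
  have hrect : MeasurableSet rect := .univ_pi fun i => hs i
  have hstay : staysIn (fun n (w : ℕ → S) => w n) s n =
      Preorder.frestrictLe (π := fun _ => S) n ⁻¹' rect := by
    ext w
    simp [staysIn, rect]
  have hstep := DFunLike.congr_fun
    (Kernel.map_frestrictLe_trajMeasure_compProd_eq_map_trajMeasure (X := fun _ => S) (μ₀ := μ₀)
      (a := n) (κ := fun n =>
        (Q n).comap (fun v => v ⟨n, Finset.mem_Iic.2 le_rfl⟩) (measurable_pi_apply _)))
    (rect ×ˢ A)
  rw [Measure.compProd_apply_prod hrect hA,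
    setLIntegral_map hrect (Kernel.measurable_coe _ hA) (by fun_prop),
    Measure.map_apply (by fun_prop) (hrect.prod hA)] at hstep
  rw [Measure.map_apply (measurable_pi_apply _) hA,
    Measure.restrict_apply (measurable_pi_apply _ hA), Set.inter_comm, hstay,
    Measure.bind_apply hA (Q n).aemeasurable,
    lintegral_map ((Q n).measurable_coe hA) (measurable_pi_apply _)]
  exact hstep.symm

/-- The chain is realized on `ℝ` because `Achievable` asks for a probability space in `Type`, while
`ℕ → S` may live in a higher universe. -/
theorem exists_mcStep [StandardBorelSpace S] :
    ∃ (μ : Measure ℝ) (Z : ℕ → ℝ → S), IsProbabilityMeasure μ ∧ (∀ n, Measurable (Z n)) ∧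
      μ.map (Z 0) = μ₀ ∧ MCStep μ Q Z := by
  have := nonempty_of_isProbabilityMeasure μ₀
  obtain ⟨e, he⟩ := exists_measurableEmbedding_real (ℕ → S)
  obtain ⟨g, hg, hge⟩ := he.exists_measurable_extend measurable_id fun _ => inferInstance
  have hZ (n : ℕ) : Measurable fun ω => g ω n := (measurable_pi_apply n).comp hg
  have hZe (n : ℕ) : (fun ω => g ω n) ∘ e = fun w => w n := by
    ext w
    exact congrFun (congrFun hge w) n
  refine ⟨(chainMeasure μ₀ Q).map e, fun n ω => g ω n,
    Measure.isProbabilityMeasure_map he.measurable.aemeasurable, hZ, ?_, ?_⟩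
  · rw [Measure.map_map (hZ 0) he.measurable, hZe, map_chainMeasure_zero]
  · rw [mcStep_map_iff he.measurable hZ]
    simpa only [hZe] using mcStep_chainMeasure μ₀ Q

theorem exists_kernel_seq {p : ℕ → Measure S → Kernel S S → Prop}
    (h : ∀ m (μ : Measure S), IsProbabilityMeasure μ → ∃ κ, IsMarkovKernel κ ∧ p m μ κ) :
    ∃ (Q : ℕ → Kernel S S) (L : ℕ → Measure S), (∀ m, IsMarkovKernel (Q m)) ∧ L 0 = μ₀ ∧
      (∀ m, L (m + 1) = Q m ∘ₘ L m) ∧ ∀ m, p m (L m) (Q m) := by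
  choose κ hκ hp using h
  let next (m : ℕ) (μ : ProbabilityMeasure S) : ProbabilityMeasure S :=
    have := hκ m μ μ.2
    ⟨κ m μ μ.2 ∘ₘ (μ : Measure S), inferInstance⟩
  let L (m : ℕ) : ProbabilityMeasure S := Nat.rec ⟨μ₀, ‹_›⟩ next m
  exact ⟨fun m => κ m (L m).1 (L m).2, fun m => (L m).1, fun m => hκ m _ _, rfl, fun _ => rfl,
    fun m => hp m _ _⟩

end ChainExistence

section MarkovianCoupling

lemma eq_dirac_of_marginals {S T : Type*} [MeasurableSpace S] [MeasurableSpace T]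
    [MeasurableSingletonClass S] [MeasurableSingletonClass T] {γ : Measure (S × T)} {x : S} {y : T}
    (hfst : γ.fst = .dirac x) (hsnd : γ.snd = .dirac y) : γ = .dirac (x, y) := by
  have hx : ∀ᵐ z ∂γ, z.1 = x := ae_of_ae_map (p := (· = x)) measurable_fst.aemeasurable
    (hfst.symm ▸ (ae_dirac_iff (measurableSet_singleton x)).2 rfl : ∀ᵐ a ∂γ.fst, a = x)
  have hy : ∀ᵐ z ∂γ, z.2 = y := ae_of_ae_map (p := (· = y)) measurable_snd.aemeasurable
    (hsnd.symm ▸ (ae_dirac_iff (measurableSet_singleton y)).2 rfl : ∀ᵐ b ∂γ.snd, b = y)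
  have hxy : ∀ᵐ z ∂γ, id z = (x, y) := by
    filter_upwards [hx, hy] with z hzx hzy using Prod.ext hzx hzy
  have hmass : γ Set.univ = 1 := by rw [← Measure.fst_univ, hfst, measure_univ]
  rw [← Measure.map_id (μ := γ), Measure.map_congr hxy, Measure.map_const, hmass, one_smul]

variable {E : Type*} [MeasurableSpace E] [Preorder E]

lemma StochDom.hallCondition [TopologicalSpace E] [BorelSpace E] [OrderClosedTopology E]
    {α α' : Measure E} (h : StochDom α α') : HallCondition (leRel E) α α' := fun K hK =>
  (measure_mono (subset_image_leRel K)).trans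
    (h _ (isClosed_relImage_of_isCompact isClosed_leRel hK).measurableSet
      (isUpperSet_image_leRel K))

variable {P : Kernel E E} {x y : E} {s : ℕ → Measure (E × E)} {ν ν' : ℕ → Measure E}
  {ρ : ℕ → Measure (E × E)} {R : ℕ → Kernel (E × E) (E × E)}

namespace IsResidualCoupling

lemma restrict_add_compl (hρ : IsResidualCoupling P s ν ν' ρ R)
    (h : IsGreedyMatching P x y s ν ν') (m : ℕ) :
    (s m + ρ m).restrict (leRel E)ᶜ = ρ m := by
  rw [Measure.restrict_add, Measure.restrict_eq_zero.2 (h.supported m), zero_add]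
  exact Measure.restrict_eq_self_of_ae_mem (compl_mem_ae_iff.2 (hρ.leRel_eq_zero m))

lemma add_eq_dirac [MeasurableSingletonClass E] (hρ : IsResidualCoupling P s ν ν' ρ R)
    (h : IsGreedyMatching P x y s ν ν') : s 0 + ρ 0 = .dirac (x, y) := by
  apply eq_dirac_of_marginals
  · rw [Measure.fst_add, hρ.fst_eq, h.zero.fst_add]
  · rw [Measure.snd_add, hρ.snd_eq, h.zero.snd_add]

end IsResidualCoupling

variable [TopologicalSpace E] [PolishSpace E] [BorelSpace E] [OrderClosedTopology E]
  [IsMarkovKernel P]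

namespace MonotoneKernel

theorem exists_kernel_coupling_extending [Nonempty E] (hP : MonotoneKernel P)
    (π : Measure (E × E)) [IsFiniteMeasure π] (R : Kernel (E × E) (E × E)) [IsMarkovKernel R] :
    ∃ Q : Kernel (E × E) (E × E), IsMarkovKernel Q ∧
      (∀ᵐ z ∂π.restrict (leRel E), Q z (leRel E)ᶜ = 0 ∧ (Q z).fst = P z.1 ∧ (Q z).snd = P z.2) ∧
      ∀ z ∈ (leRel E)ᶜ, Q z = R z := by
  have hM : MeasurableSet (leRel E) := measurableSet_leRel
  have hall : ∀ᵐ z ∂π.restrict (leRel E),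
      HallCondition (leRel E) (P.prodMkRight E z) (P.prodMkLeft E z) := by
    filter_upwards [ae_restrict_mem hM] with z hz
    rw [Kernel.prodMkRight_apply, Kernel.prodMkLeft_apply]
    simpa only [kpow_one] using (hP.stochDom_kpow 1 hz).hallCondition
  obtain ⟨K, hK, hKP⟩ := exists_kernel_coupling isClosed_leRel _ _ _ hall
  classical
  refine ⟨K.piecewise hM R, inferInstance, ?_, fun z hz => ?_⟩
  · filter_upwards [hKP, ae_restrict_mem hM] with z hz hzM
    rw [Kernel.piecewise_apply, if_pos (show z ∈ leRel E from hzM)]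
    exact hz
  · rw [Kernel.piecewise_apply, if_neg hz]

theorem exists_mcStep_extending [Nonempty E] (hP : MonotoneKernel P) (π₀ : Measure (E × E))
    [IsProbabilityMeasure π₀] (R : ℕ → Kernel (E × E) (E × E)) [∀ m, IsMarkovKernel (R m)] :
    ∃ (Q : ℕ → Kernel (E × E) (E × E)) (μ : Measure ℝ) (Z : ℕ → ℝ → E × E),
      (∀ m, IsMarkovKernel (Q m)) ∧ IsProbabilityMeasure μ ∧ (∀ m, Measurable (Z m)) ∧
      μ.map (Z 0) = π₀ ∧ MCStep μ Q Z ∧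
      (∀ m, ∀ᵐ z ∂(μ.map (Z m)).restrict (leRel E),
        Q m z (leRel E)ᶜ = 0 ∧ (Q m z).fst = P z.1 ∧ (Q m z).snd = P z.2) ∧
      ∀ m, ∀ z ∈ (leRel E)ᶜ, Q m z = R m z := by
  obtain ⟨Q, L, hQ, hL₀, hL, hcoupling⟩ := exists_kernel_seq π₀ fun m π _ =>
    hP.exists_kernel_coupling_extending π (R m)
  obtain ⟨μ, Z, hμ, hZ, hZ₀, hstep⟩ := exists_mcStep π₀ Q
  have hZL (m : ℕ) : μ.map (Z m) = L m := by
    induction m with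
    | zero => rw [hZ₀, hL₀]
    | succ m ih => rw [hstep.map_succ hZ, hL, ih]
  simp only [← hZL] at hcoupling
  exact ⟨Q, μ, Z, hQ, hμ, hZ, hZ₀, hstep, fun m => (hcoupling m).1, fun m => (hcoupling m).2⟩

end MonotoneKernel

theorem IsResidualCoupling.exists_isMarkovianCoupling (hρ : IsResidualCoupling P s ν ν' ρ R)
    (hP : MonotoneKernel P) (h : IsGreedyMatching P x y s ν ν') :
    ∃ (μ : Measure ℝ) (X Y : ℕ → ℝ → E), IsMarkovianCoupling P x y μ X Y ∧
      ∀ m, μ {ω | ¬ X m ω ≤ Y m ω} = ν m Set.univ := by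
  have : Nonempty E := ⟨x⟩
  have hM : MeasurableSet (leRel E) := measurableSet_leRel
  have := hρ.isMarkovKernel
  obtain ⟨Q, μ, Z, hQ, hμ, hZ, hZ₀, hstep, hon, hoff⟩ :=
    hP.exists_mcStep_extending (.dirac (x, y)) R
  have hstart : ∀ᵐ ω ∂μ, Z 0 ω = (x, y) := ae_of_ae_map (p := (· = (x, y))) (hZ 0).aemeasurable
    (hZ₀ ▸ (ae_dirac_iff (measurableSet_singleton _)).2 rfl)
  have habsorb (m : ℕ) := (hon m).mono fun _ hz => hz.1
  have hQR (m : ℕ) : ∀ᵐ z ∂ρ m, Q m z = R m z :=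
    (measure_eq_zero_iff_ae_notMem.1 (hρ.leRel_eq_zero m)).mono (hoff m)
  have hzero : (μ.map (Z 0)).restrict (leRel E)ᶜ = ρ 0 := by
    rw [hZ₀, ← hρ.add_eq_dirac h, hρ.restrict_add_compl h]
  have hres (m : ℕ) := hρ.restrict_add_compl h (m + 1)
  have hlaw (m : ℕ) : (μ.map (Z m)).restrict (leRel E)ᶜ = ρ m :=
    restrict_compl_eq_of_comp_eq hM (fun m => hstep.map_succ hZ m) habsorb hzero
      (fun m => (Measure.comp_congr (hQR m)).trans (hρ.comp_eq m)) hres m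
  have hX : MCStep μ (fun _ => P) fun n ω => (Z n ω).1 :=
    hstep.comp_of_isLumpedStep hZ measurable_fst hM habsorb
      (fun m => (hon m).mono fun _ hz => hz.2.1) hzero hres
      fun m => (hρ.lumped_fst m).congr (hQR m)
  have hY : MCStep μ (fun _ => P) fun n ω => (Z n ω).2 :=
    hstep.comp_of_isLumpedStep hZ measurable_snd hM habsorb
      (fun m => (hon m).mono fun _ hz => hz.2.2) hzero hres
      fun m => (hρ.lumped_snd m).congr (hQR m)
  refine ⟨μ, fun n ω => (Z n ω).1, fun n ω => (Z n ω).2,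
    ⟨⟨hμ, fun n => (hZ n).fst, hstart.mono fun _ hω => congrArg Prod.fst hω, hX⟩,
      ⟨hμ, fun n => (hZ n).snd, hstart.mono fun _ hω => congrArg Prod.snd hω, hY⟩, Q, hQ, hstep⟩,
    fun m => ?_⟩
  rw [← hρ.fst_eq, Measure.fst_univ, ← hlaw, Measure.restrict_apply_univ,
    Measure.map_apply (hZ m) hM.compl]
  rfl

end MarkovianCoupling

theorem stmt13_general {E : Type*} [TopologicalSpace E] [PolishSpace E] [MeasurableSpace E]
    [BorelSpace E] [Preorder E] [OrderClosedTopology E] (P : Kernel E E) [IsMarkovKernel P]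
    (hmono : MonotoneKernel P) (H : Set (E × E)) (hach : Achievable P H) (A B : Set E)
    (hAB : ∀ a ∈ A, ∀ b ∈ B, a ≤ b) (ε : ENNReal) (hε : 0 < ε) (N : ℕ)
    (hA : ∀ p ∈ H, ε ≤ kpow P N p.1 A) (hB : ∀ p ∈ H, ε ≤ kpow P N p.2 B) :
    Achievable P {p : E × E | p.1 ≤ p.2} := by
  intro x y
  obtain ⟨q, hq, hgap⟩ := hmono.exists_eventually_upperGap_le hach hAB hε hA hB
  obtain ⟨s, ν, ν', h⟩ := exists_isGreedyMatching P x y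
  have hlim : Tendsto (fun m => ν m Set.univ) atTop (𝓝 0) := h.tendsto_residual_univ hq hgap
  obtain ⟨ρ, R, hρ⟩ := h.exists_isResidualCoupling hlim
  obtain ⟨μ, X, Y, hXY, hlaw⟩ := hρ.exists_isMarkovianCoupling hmono h
  refine ⟨ℝ, inferInstance, μ, X, Y, hXY, le_antisymm (ge_of_tendsto' hlim fun m => ?_) zero_le⟩
  rw [← hlaw m]
  exact measure_mono fun ω hω hle => hω ⟨m, hle⟩

/-- Lemma 3.6: if `C × C` is achievable and there are Borel sets `A ⪯ B`,
`ε > 0` and `N ≥ 1` with `P⁽ᴺ⁾(x, A) ≥ ε` and `P⁽ᴺ⁾(x, B) ≥ ε` for all `x ∈ C`, then the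
set `M = {(x,y) : x ⪯ y}` is achievable. -/
theorem stmt13 {E : Type*} [MetricSpace E] [PolishSpace E] [MeasurableSpace E] [BorelSpace E]
    [PartialOrder E] [OrderClosedTopology E]
    (P : Kernel E E) [IsMarkovKernel P] (hmono : MonotoneKernel P)
    (C : Set E) (hCm : MeasurableSet C)
    (hach : Achievable P (C ×ˢ C))
    (A B : Set E) (hAm : MeasurableSet A) (hBm : MeasurableSet B)
    (hAB : ∀ a ∈ A, ∀ b ∈ B, a ≤ b)
    (ε : ENNReal) (hε : 0 < ε) (N : ℕ) (hN : 1 ≤ N)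
    (hSA : ∀ x ∈ C, ε ≤ kpow P N x A) (hSB : ∀ x ∈ C, ε ≤ kpow P N x B) :
    Achievable P {p : E × E | p.1 ≤ p.2} :=
  stmt13_general P hmono (C ×ˢ C) hach A B hAB ε hε N (fun p hp => hSA p.1 hp.1)
    fun p hp => hSB p.2 hp.2
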